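/- arXiv:2407.06364 — 2 statements merged into one kernel-verified Lean document; each statement's English description precedes it below -/
import Mathlib

section
/- Let T be a tensorly faithful Wakamatsu tilting (S,R)-bimodule and M a right R-module of finite Gorenstein injective dimension. If either the projective dimension of T as a right R-module is finite, or the injective dimension of T as a right R-module is finite, then M belongs to the Bass class ℬ_T(R). -/
open Function MulOpposite

universe u

noncomputable section

/-! ## Chain conditions -/

/-- A ring is right coherent if every finitely generated right ideal is finitely presented. -/
def IsRightCoherentRing (R : Type u) [Ring R] : Prop :=
  ∀ I : Submodule Rᵐᵒᵖ R, I.FG → Module.FinitePresentation Rᵐᵒᵖ I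

/-- A ring is left coherent if every finitely generated left ideal is finitely presented. -/
def IsLeftCoherentRing (S : Type u) [Ring S] : Prop :=
  ∀ I : Submodule S S, I.FG → Module.FinitePresentation S I

/-- A ring is right Noetherian if every right ideal is finitely generated. -/
def IsRightNoetherianRing (R : Type u) [Ring R] : Prop :=
  ∀ I : Submodule Rᵐᵒᵖ R, I.FG

/-! ## The tensor product `N ⊗_S T` of a right `S`-module `N` with a left `S`-module `T` -/

section MTensor

variable (S : Type u) [Ring S]
variable (N : Type u) [AddCommGroup N] [Module Sᵐᵒᵖ N]
variable (T : Type u) [AddCommGroup T] [Module S T]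

/-- The subgroup of balancing relations defining `N ⊗_S T` as a quotient of `T ⊗_ℤ N`. -/
def mtRel : AddSubgroup (TensorProduct ℤ T N) :=
  AddSubgroup.closure
    {x | ∃ (s : S) (t : T) (n : N), x = (s • t) ⊗ₜ[ℤ] n - t ⊗ₜ[ℤ] (op s • n)}

/-- `MTensor S N T` is the tensor product `N ⊗_S T` of a right `S`-module `N` with a left
`S`-module `T`, realized as a quotient of `T ⊗_ℤ N`. -/
def MTensor : Type u := TensorProduct ℤ T N ⧸ mtRel S N T

instance : AddCommGroup (MTensor S N T) :=
  inferInstanceAs (AddCommGroup (TensorProduct ℤ T N ⧸ mtRel S N T))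

variable {S N T}

/-- `MTensor.mk n t` is the element `n ⊗ t` of `N ⊗_S T`. -/
def MTensor.mk (n : N) (t : T) : MTensor S N T := QuotientAddGroup.mk (t ⊗ₜ[ℤ] n)

section Map

variable {N' : Type u} [AddCommGroup N'] [Module Sᵐᵒᵖ N']

/-- Functoriality of `N ⊗_S T` in the right `S`-module variable `N`. -/
def MTensor.map (g : N →ₗ[Sᵐᵒᵖ] N') : MTensor S N T →+ MTensor S N' T :=
  QuotientAddGroup.map _ _
    (LinearMap.lTensor T g.toAddMonoidHom.toIntLinearMap).toAddMonoidHom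
    (by
      refine (AddSubgroup.closure_le _).2 ?_
      rintro x ⟨s, t, n, rfl⟩
      simp only [SetLike.mem_coe, AddSubgroup.mem_comap, LinearMap.toAddMonoidHom_coe,
        map_sub, LinearMap.lTensor_tmul, AddMonoidHom.coe_toIntLinearMap,
        LinearMap.toAddMonoidHom_coe, map_smul]
      exact AddSubgroup.subset_closure ⟨s, t, g n, rfl⟩)

end Map

section LMap

variable {T' : Type u} [AddCommGroup T'] [Module S T']

/-- Functoriality of `N ⊗_S T` in the left `S`-module variable `T`. -/
def MTensor.lmap (h : T →ₗ[S] T') : MTensor S N T →+ MTensor S N T' :=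
  QuotientAddGroup.map _ _
    (LinearMap.rTensor N h.toAddMonoidHom.toIntLinearMap).toAddMonoidHom
    (by
      refine (AddSubgroup.closure_le _).2 ?_
      rintro x ⟨s, t, n, rfl⟩
      simp only [SetLike.mem_coe, AddSubgroup.mem_comap, LinearMap.toAddMonoidHom_coe,
        map_sub, LinearMap.rTensor_tmul, AddMonoidHom.coe_toIntLinearMap, map_smul]
      exact AddSubgroup.subset_closure ⟨s, h t, n, rfl⟩)

end LMap

section Bimod

variable (R : Type u) [Ring R] [Module Rᵐᵒᵖ T] [SMulCommClass S Rᵐᵒᵖ T]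

instance MTensor.instSMul : SMul Rᵐᵒᵖ (MTensor S N T) :=
  ⟨fun ρ =>
    QuotientAddGroup.map _ _ (DistribMulAction.toAddMonoidHom (TensorProduct ℤ T N) ρ)
      (by
        refine (AddSubgroup.closure_le _).2 ?_
        rintro x ⟨s, t, n, rfl⟩
        simp only [SetLike.mem_coe, AddSubgroup.mem_comap,
          DistribMulAction.toAddMonoidHom_apply, smul_sub, TensorProduct.smul_tmul']
        exact AddSubgroup.subset_closure ⟨s, ρ • t, n, by rw [smul_comm s ρ t]⟩)⟩

instance MTensor.instModule : Module Rᵐᵒᵖ (MTensor S N T) :=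
  Function.Surjective.module Rᵐᵒᵖ (QuotientAddGroup.mk' (mtRel S N T))
    (QuotientAddGroup.mk'_surjective _) (fun _ _ => rfl)

theorem MTensor.smul_mk (ρ : Rᵐᵒᵖ) (n : N) (t : T) :
    ρ • (MTensor.mk n t : MTensor S N T) = MTensor.mk n (ρ • t) := by
  show QuotientAddGroup.mk (ρ • (t ⊗ₜ[ℤ] n)) = QuotientAddGroup.mk ((ρ • t) ⊗ₜ[ℤ] n)
  rw [TensorProduct.smul_tmul']

theorem MTensor.mk_add_right (n : N) (t t' : T) :
    (MTensor.mk n (t + t') : MTensor S N T) = MTensor.mk n t + MTensor.mk n t' := by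
  show QuotientAddGroup.mk _ = _
  rw [TensorProduct.add_tmul]
  rfl

/-- The natural map `θ_N : N → Hom_R(T, N ⊗_S T)`, `n ↦ (t ↦ n ⊗ t)`. -/
def MTensor.theta (n : N) : T →ₗ[Rᵐᵒᵖ] MTensor S N T where
  toFun t := MTensor.mk n t
  map_add' t t' := MTensor.mk_add_right n t t'
  map_smul' ρ t := (MTensor.smul_mk R ρ n t).symm

variable (S T N) in
/-- The natural map `θ_N : N → Hom_R(T, N ⊗_S T)` as a function. -/
def MTensor.thetaFun : N → (T →ₗ[Rᵐᵒᵖ] MTensor S N T) := fun n => MTensor.theta R n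

end Bimod

end MTensor

/-! ## The right `S`-module structure on `Hom_A(T, M)` induced by a left `S`-action on `T` -/

section HomModule

variable {B A : Type u} [Ring B] [Ring A]
variable {T : Type u} [AddCommGroup T] [Module A T] [Module B T] [SMulCommClass B A T]
variable {M : Type u} [AddCommGroup M] [Module A M]

instance homDomSMul : SMul Bᵐᵒᵖ (T →ₗ[A] M) :=
  ⟨fun b f =>
    { toFun := fun t => f (b.unop • t)
      map_add' := fun t t' => by
        show f (b.unop • (t + t')) = f (b.unop • t) + f (b.unop • t')
        rw [smul_add, map_add]
      map_smul' := fun a t => by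
        show f (b.unop • a • t) = a • f (b.unop • t)
        rw [smul_comm b.unop a t, map_smul] }⟩

@[simp] theorem homDomSMul_apply (b : Bᵐᵒᵖ) (f : T →ₗ[A] M) (t : T) :
    (b • f) t = f (b.unop • t) := rfl

instance homDomModule : Module Bᵐᵒᵖ (T →ₗ[A] M) where
  one_smul f := LinearMap.ext fun t => by simp
  mul_smul b b' f := LinearMap.ext fun t => by simp [mul_smul]
  smul_zero b := LinearMap.ext fun t => rfl
  smul_add b f g := LinearMap.ext fun t => rfl
  add_smul b b' f := LinearMap.ext fun t => by simp [add_smul]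
  zero_smul f := LinearMap.ext fun t => by simp

end HomModule

/-! ## The evaluation map `ν_M : Hom_R(T, M) ⊗_S T → M` -/

section Nu

variable (S R : Type u) [Ring S] [Ring R]
variable (T : Type u) [AddCommGroup T] [Module S T] [Module Rᵐᵒᵖ T] [SMulCommClass S Rᵐᵒᵖ T]
variable (M : Type u) [AddCommGroup M] [Module Rᵐᵒᵖ M]

/-- The evaluation map `ν_M : Hom_R(T, M) ⊗_S T → M`, `f ⊗ t ↦ f t`. -/
def MTensor.nuFun : MTensor S (T →ₗ[Rᵐᵒᵖ] M) T →+ M :=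
  QuotientAddGroup.lift _
    (TensorProduct.liftAddHom
      { toFun := fun t =>
          { toFun := fun f : T →ₗ[Rᵐᵒᵖ] M => f t
            map_zero' := rfl
            map_add' := fun f g => rfl }
        map_zero' := AddMonoidHom.ext fun f => f.map_zero
        map_add' := fun t t' => AddMonoidHom.ext fun f => f.map_add t t' }
      (fun z t f => by
        show f (z • t) = (z • f) t
        rw [map_zsmul, LinearMap.smul_apply]))
    (by
      refine (AddSubgroup.closure_le _).2 ?_
      rintro x ⟨s, t, f, rfl⟩
      simp only [SetLike.mem_coe, AddMonoidHom.mem_ker, map_sub,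
        TensorProduct.liftAddHom_tmul, AddMonoidHom.coe_mk, ZeroHom.coe_mk]
      show f (s • t) - (op s • f) t = 0
      rw [homDomSMul_apply]
      simp)

end Nu


/-! ## Resolutions and derived-functor vanishing -/

/-- The data of a nonnegatively graded chain complex `⋯ → P 1 → P 0 → X` of `A`-modules. -/
structure ResolutionData (A : Type u) [Ring A] (X : Type u) [AddCommGroup X] [Module A X] :
    Type (u + 1) where
  P : ℕ → Type u
  [instAdd : ∀ n, AddCommGroup (P n)]
  [instMod : ∀ n, Module A (P n)]
  d : ∀ n, P (n + 1) →ₗ[A] P n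
  ε : P 0 →ₗ[A] X

attribute [instance] ResolutionData.instAdd ResolutionData.instMod

/-- The property of being a projective resolution. -/
structure ResolutionData.IsProjResolution {A : Type u} [Ring A] {X : Type u} [AddCommGroup X]
    [Module A X] (Q : ResolutionData A X) : Prop where
  proj : ∀ n, Module.Projective A (Q.P n)
  surj : Function.Surjective Q.ε
  exact0 : Function.Exact (Q.d 0) Q.ε
  exactSucc : ∀ n, Function.Exact (Q.d (n + 1)) (Q.d n)

/-- `X` has a resolution by finitely generated projective `A`-modules. -/
def HasFGProjResolution (A : Type u) [Ring A] (X : Type u) [AddCommGroup X] [Module A X] : Prop :=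
  ∃ Q : ResolutionData A X, Q.IsProjResolution ∧ ∀ n, Module.Finite A (Q.P n)

/-- `Ext^i_A(X, Y) = 0` for all `i ≥ 1`: some (equivalently, any) projective resolution of `X`
has `Hom_A(-, Y)`-complex exact at all positive degrees. -/
def ExtVanishAll (A : Type u) [Ring A] (X Y : Type u) [AddCommGroup X] [Module A X]
    [AddCommGroup Y] [Module A Y] : Prop :=
  ∃ Q : ResolutionData A X, Q.IsProjResolution ∧
    ∀ j : ℕ, Function.Exact
      (fun f : Q.P j →ₗ[A] Y => f.comp (Q.d j))
      (fun f : Q.P (j + 1) →ₗ[A] Y => f.comp (Q.d (j + 1)))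

/-- `Ext^1_A(X, Y) = 0`: every short exact sequence `0 → Y → E → X → 0` splits. -/
def Ext1Vanishes (A : Type u) [Ring A] (X Y : Type u) [AddCommGroup X] [Module A X]
    [AddCommGroup Y] [Module A Y] : Prop :=
  ∀ (E : Type u) [AddCommGroup E] [Module A E] (i : Y →ₗ[A] E) (p : E →ₗ[A] X),
    Function.Injective i → Function.Surjective p → Function.Exact i p →
      ∃ s : X →ₗ[A] E, p.comp s = LinearMap.id

/-- `Tor^S_i(N, T) = 0` for all `i ≥ 1`: some (equivalently, any) projective resolution of the
right `S`-module `N` stays exact in positive degrees after applying `- ⊗_S T`. -/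
def TorVanishAll (S : Type u) [Ring S] (N : Type u) [AddCommGroup N] [Module Sᵐᵒᵖ N]
    (T : Type u) [AddCommGroup T] [Module S T] : Prop :=
  ∃ Q : ResolutionData Sᵐᵒᵖ N, Q.IsProjResolution ∧
    ∀ j : ℕ, Function.Exact
      (⇑(MTensor.map (T := T) (Q.d (j + 1))))
      (⇑(MTensor.map (T := T) (Q.d j)))

/-! ## Homological dimensions -/

/-- A surjection onto `M` from some module. -/
structure EpiOnto (A : Type u) [Ring A] (M : ModuleCat.{u} A) : Type (u + 1) where
  P : ModuleCat.{u} A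
  f : P →ₗ[A] M
  surj : Function.Surjective f

/-- An injection of `M` into some module. -/
structure MonoInto (A : Type u) [Ring A] (M : ModuleCat.{u} A) : Type (u + 1) where
  E : ModuleCat.{u} A
  f : M →ₗ[A] E
  inj : Function.Injective f

/-- `HasClassResolution A 𝒞 n M` says that there is an exact sequence
`0 → C_n → ⋯ → C_0 → M → 0` with all `C_i` in the class `𝒞`. -/
def HasClassResolution (A : Type u) [Ring A] (C : ModuleCat.{u} A → Prop) :
    ℕ → ModuleCat.{u} A → Prop
  | 0, M => C M
  | n + 1, M => ∃ e : EpiOnto A M, C e.P ∧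
      HasClassResolution A C n (ModuleCat.of A (LinearMap.ker e.f))

/-- `HasClassCoresolution A 𝒞 n M` says that there is an exact sequence
`0 → M → C^0 → ⋯ → C^n → 0` with all `C^i` in the class `𝒞`. -/
def HasClassCoresolution (A : Type u) [Ring A] (C : ModuleCat.{u} A → Prop) :
    ℕ → ModuleCat.{u} A → Prop
  | 0, M => C M
  | n + 1, M => ∃ m : MonoInto A M, C m.E ∧
      HasClassCoresolution A C n (ModuleCat.of A ((↥m.E) ⧸ LinearMap.range m.f))

/-- The projective dimension of `M` is at most `n`. -/
def ProjDimLE (A : Type u) [Ring A] (M : Type u) [AddCommGroup M] [Module A M] (n : ℕ) : Prop :=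
  HasClassResolution A (fun P => Module.Projective A P) n (ModuleCat.of A M)

/-- The injective dimension of `M` is at most `n`. -/
def InjDimLE (A : Type u) [Ring A] (M : Type u) [AddCommGroup M] [Module A M] (n : ℕ) : Prop :=
  HasClassCoresolution A (fun E => Module.Injective A E) n (ModuleCat.of A M)

/-- A right `S`-module `N` is flat if `N ⊗_S -` preserves injections of left `S`-modules. -/
def IsFlatRightModule (S : Type u) [Ring S] (N : Type u) [AddCommGroup N] [Module Sᵐᵒᵖ N] :
    Prop :=
  ∀ (X Y : Type u) [AddCommGroup X] [Module S X] [AddCommGroup Y] [Module S Y]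
    (g : X →ₗ[S] Y), Function.Injective g →
      Function.Injective (MTensor.lmap (N := N) g)

/-- The flat dimension of the right `S`-module `N` is at most `n`. -/
def FlatDimLE (S : Type u) [Ring S] (N : Type u) [AddCommGroup N] [Module Sᵐᵒᵖ N] (n : ℕ) :
    Prop :=
  HasClassResolution Sᵐᵒᵖ (fun P => IsFlatRightModule S P) n (ModuleCat.of Sᵐᵒᵖ N)

/-! ## Gorenstein homological algebra -/

/-- The data of a `ℤ`-indexed complex of `A`-modules. -/
structure ZComplex (A : Type u) [Ring A] : Type (u + 1) where
  P : ℤ → Type u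
  [instAdd : ∀ i, AddCommGroup (P i)]
  [instMod : ∀ i, Module A (P i)]
  d : ∀ i, P i →ₗ[A] P (i + 1)

attribute [instance] ZComplex.instAdd ZComplex.instMod

/-- Exactness of a `ℤ`-indexed complex. -/
def ZComplex.IsExact {A : Type u} [Ring A] (C : ZComplex A) : Prop :=
  ∀ i, Function.Exact (C.d i) (C.d (i + 1))

/-- A module is Gorenstein projective if it is a kernel of a totally acyclic complex of
projective modules. -/
def IsGorensteinProjective (A : Type u) [Ring A] (N : Type u) [AddCommGroup N] [Module A N] :
    Prop :=
  ∃ C : ZComplex A, (∀ i, Module.Projective A (C.P i)) ∧ C.IsExact ∧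
    (∀ (Q : Type u) [AddCommGroup Q] [Module A Q], Module.Projective A Q →
      ∀ i, Function.Exact
        (fun f : C.P (i + 1 + 1) →ₗ[A] Q => f.comp (C.d (i + 1)))
        (fun f : C.P (i + 1) →ₗ[A] Q => f.comp (C.d i))) ∧
    Nonempty (N ≃ₗ[A] LinearMap.ker (C.d 0))

/-- A module is Gorenstein injective if it is a kernel of a totally acyclic complex of
injective modules. -/
def IsGorensteinInjective (A : Type u) [Ring A] (M : Type u) [AddCommGroup M] [Module A M] :
    Prop :=
  ∃ C : ZComplex A, (∀ i, Module.Injective A (C.P i)) ∧ C.IsExact ∧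
    (∀ (I : Type u) [AddCommGroup I] [Module A I], Module.Injective A I →
      ∀ i, Function.Exact
        (fun f : I →ₗ[A] C.P i => (C.d i).comp f)
        (fun f : I →ₗ[A] C.P (i + 1) => (C.d (i + 1)).comp f)) ∧
    Nonempty (M ≃ₗ[A] LinearMap.ker (C.d 0))

/-- A right `S`-module is Gorenstein flat if it is a kernel of a complex of flat right
`S`-modules which stays exact after tensoring with any injective left `S`-module. -/
def IsGorensteinFlat (S : Type u) [Ring S] (N : Type u) [AddCommGroup N] [Module Sᵐᵒᵖ N] :
    Prop :=
  ∃ C : ZComplex Sᵐᵒᵖ, (∀ i, IsFlatRightModule S (C.P i)) ∧ C.IsExact ∧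
    (∀ (I : Type u) [AddCommGroup I] [Module S I], Module.Injective S I →
      ∀ i, Function.Exact
        (⇑(MTensor.map (T := I) (C.d i)))
        (⇑(MTensor.map (T := I) (C.d (i + 1))))) ∧
    Nonempty (N ≃ₗ[Sᵐᵒᵖ] LinearMap.ker (C.d 0))

/-- The Gorenstein projective dimension of `N` is at most `n`. -/
def GpdLE (A : Type u) [Ring A] (N : Type u) [AddCommGroup N] [Module A N] (n : ℕ) : Prop :=
  HasClassResolution A (fun P => IsGorensteinProjective A P) n (ModuleCat.of A N)

/-- The Gorenstein flat dimension of the right `S`-module `N` is at most `n`. -/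
def GfdLE (S : Type u) [Ring S] (N : Type u) [AddCommGroup N] [Module Sᵐᵒᵖ N] (n : ℕ) : Prop :=
  HasClassResolution Sᵐᵒᵖ (fun P => IsGorensteinFlat S P) n (ModuleCat.of Sᵐᵒᵖ N)

/-- The Gorenstein injective dimension of `M` is at most `n`. -/
def GidLE (A : Type u) [Ring A] (M : Type u) [AddCommGroup M] [Module A M] (n : ℕ) : Prop :=
  HasClassCoresolution A (fun E => IsGorensteinInjective A E) n (ModuleCat.of A M)

/-! ## Module classes `Prod(C)`, `Add(C)`, `add(C)` and (co)generators -/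

/-- `M` is a retract (equivalently, a direct summand up to isomorphism) of `P`. -/
def IsRetractOf (A : Type u) [Ring A] (M P : Type u) [AddCommGroup M] [Module A M]
    [AddCommGroup P] [Module A P] : Prop :=
  ∃ (f : M →ₗ[A] P) (g : P →ₗ[A] M), g.comp f = LinearMap.id

/-- `Prod(C)`: direct summands of direct products of copies of `C`. -/
def InProdClass (A : Type u) [Ring A] (C : Type u) [AddCommGroup C] [Module A C]
    (M : ModuleCat.{u} A) : Prop :=
  ∃ I : Type u, IsRetractOf A M (I → C)

/-- `Add(C)`: direct summands of direct sums of copies of `C`. -/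
def InAddClass (A : Type u) [Ring A] (C : Type u) [AddCommGroup C] [Module A C]
    (M : ModuleCat.{u} A) : Prop :=
  ∃ I : Type u, IsRetractOf A M (I →₀ C)

/-- `add(C)`: direct summands of finite direct sums of copies of `C`. -/
def InFinAddClass (A : Type u) [Ring A] (C : Type u) [AddCommGroup C] [Module A C]
    (M : ModuleCat.{u} A) : Prop :=
  ∃ k : ℕ, IsRetractOf A M (Fin k → C)

/-- `Q` is an injective cogenerator: `Q` is injective and every module embeds into a direct
product of copies of `Q`. -/
def IsInjectiveCogenerator (A : Type u) [Ring A] (Q : Type u) [AddCommGroup Q] [Module A Q] :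
    Prop :=
  Module.Injective A Q ∧
    ∀ (M : Type u) [AddCommGroup M] [Module A M],
      ∃ (I : Type u) (f : M →ₗ[A] (I → Q)), Function.Injective f

/-- `E` is the minimal injective cogenerator: it is an injective cogenerator which is a direct
summand of every injective cogenerator. -/
def IsMinimalInjectiveCogenerator (A : Type u) [Ring A] (E : Type u) [AddCommGroup E]
    [Module A E] : Prop :=
  IsInjectiveCogenerator A E ∧
    ∀ (Q : Type u) [AddCommGroup Q] [Module A Q],
      IsInjectiveCogenerator A Q → IsRetractOf A E Q

/-! ## Bimodules, homotheties, Wakamatsu tilting bimodules -/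

section Bimodules

variable (S R : Type u) [Ring S] [Ring R]
variable (T : Type u) [AddCommGroup T] [Module S T] [Module Rᵐᵒᵖ T] [SMulCommClass S Rᵐᵒᵖ T]

/-- The natural map `S → End(T_R)` given by the left `S`-action. -/
def leftHomothety : S → (T →ₗ[Rᵐᵒᵖ] T) := fun s =>
  { toFun := fun t => s • t
    map_add' := fun t t' => smul_add s t t'
    map_smul' := fun ρ t => smul_comm s ρ t }

/-- The natural map `R → End(_S T)` given by the right `R`-action. -/
def rightHomothety : R → (T →ₗ[S] T) := fun r =>
  { toFun := fun t => op r • t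
    map_add' := fun t t' => smul_add (op r) t t'
    map_smul' := fun s t => (smul_comm s (op r) t).symm }

/-- A Wakamatsu tilting `(S, R)`-bimodule: `T` admits resolutions by finitely generated
projectives on both sides, the natural maps `S → End(T_R)` and `R → End(_S T)` are
isomorphisms, and `Ext^i(T, T) = 0` on both sides for all `i ≥ 1`. -/
structure IsWakamatsuTilting : Prop where
  fgProjResR : HasFGProjResolution Rᵐᵒᵖ T
  fgProjResS : HasFGProjResolution S T
  bijS : Function.Bijective (leftHomothety S R T)
  bijR : Function.Bijective (rightHomothety S R T)
  extR : ExtVanishAll Rᵐᵒᵖ T T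
  extS : ExtVanishAll S T T

/-- An `(S, R)`-bimodule `T` is tensorly faithful if `T ⊗_R M = 0` implies `M = 0` and
`N ⊗_S T = 0` implies `N = 0`. -/
def IsTensorlyFaithful : Prop :=
  (∀ (M : Type u) [AddCommGroup M] [Module R M],
      Subsingleton (MTensor R T M) → Subsingleton M) ∧
  (∀ (N : Type u) [AddCommGroup N] [Module Sᵐᵒᵖ N],
      Subsingleton (MTensor S N T) → Subsingleton N)

/-- Membership in the Auslander class `𝒜_T(S)`. -/
structure InAuslanderClass (N : Type u) [AddCommGroup N] [Module Sᵐᵒᵖ N] : Prop where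
  torVanish : TorVanishAll S N T
  extVanish : ExtVanishAll Rᵐᵒᵖ T (MTensor S N T)
  thetaBij : Function.Bijective (MTensor.thetaFun S N T R)

/-- Membership in the Bass class `ℬ_T(R)`. -/
structure InBassClass (M : Type u) [AddCommGroup M] [Module Rᵐᵒᵖ M] : Prop where
  extVanish : ExtVanishAll Rᵐᵒᵖ T M
  torVanish : TorVanishAll S (T →ₗ[Rᵐᵒᵖ] M) T
  nuBij : Function.Bijective (MTensor.nuFun S R T M)

end Bimodules

/-! ## Cotilting and tilting modules -/

/-- A cotilting right `R`-module (Hügel–Coelho): finite injective dimension,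
`Ext^{i≥1}_R(Cᴵ, C) = 0` for every index set `I`, and there is a finite exact sequence
`0 → C_r → ⋯ → C_0 → Q → 0` with all `C_i ∈ Prod(C)` and `Q` an injective cogenerator. -/
structure IsCotilting (R : Type u) [Ring R] (C : Type u) [AddCommGroup C] [Module Rᵐᵒᵖ C] :
    Prop where
  finInjDim : ∃ n, InjDimLE Rᵐᵒᵖ C n
  extProdVanish : ∀ I : Type u, ExtVanishAll Rᵐᵒᵖ (I → C) C
  coresolution : ∃ (Q : ModuleCat.{u} Rᵐᵒᵖ) (r : ℕ),
    IsInjectiveCogenerator Rᵐᵒᵖ Q ∧ HasClassResolution Rᵐᵒᵖ (InProdClass Rᵐᵒᵖ C) r Q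

/-- An `n`-tilting right `R`-module (Miyashita). -/
structure IsNTilting (R : Type u) [Ring R] (T : Type u) [AddCommGroup T] [Module Rᵐᵒᵖ T]
    (n : ℕ) : Prop where
  fgProjRes : HasFGProjResolution Rᵐᵒᵖ T
  projDim : ProjDimLE Rᵐᵒᵖ T n
  extVanish : ExtVanishAll Rᵐᵒᵖ T T
  coresolution : HasClassCoresolution Rᵐᵒᵖ (InFinAddClass Rᵐᵒᵖ T) n (ModuleCat.of Rᵐᵒᵖ R)

/-- The data of a coresolution `0 → R → P 0 → P 1 → ⋯` of right `R`-modules. -/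
structure WakamatsuCoresolutionData (R : Type u) [Ring R] : Type (u + 1) where
  P : ℕ → Type u
  [instAdd : ∀ n, AddCommGroup (P n)]
  [instMod : ∀ n, Module Rᵐᵒᵖ (P n)]
  f0 : R →ₗ[Rᵐᵒᵖ] P 0
  d : ∀ n, P n →ₗ[Rᵐᵒᵖ] P (n + 1)

attribute [instance] WakamatsuCoresolutionData.instAdd WakamatsuCoresolutionData.instMod

/-- A Wakamatsu tilting right `R`-module: it admits a resolution by finitely generated
projective right `R`-modules, `Ext^{i≥1}_R(T, T) = 0`, and there is an exact sequence
`0 → R → T^0 → T^1 → ⋯` with each `T^i ∈ add(T)` and `Ext^1_R(Coker f, T) = 0` for every map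
`f` in this sequence. -/
def IsWakamatsuTiltingModule (R : Type u) [Ring R] (T : Type u) [AddCommGroup T]
    [Module Rᵐᵒᵖ T] : Prop :=
  HasFGProjResolution Rᵐᵒᵖ T ∧ ExtVanishAll Rᵐᵒᵖ T T ∧
    ∃ W : WakamatsuCoresolutionData R,
      Function.Injective W.f0 ∧ Function.Exact W.f0 (W.d 0) ∧
      (∀ n, Function.Exact (W.d n) (W.d (n + 1))) ∧
      (∀ n, InFinAddClass Rᵐᵒᵖ T (ModuleCat.of Rᵐᵒᵖ (W.P n))) ∧
      Ext1Vanishes Rᵐᵒᵖ ((W.P 0) ⧸ LinearMap.range W.f0) T ∧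
      (∀ n, Ext1Vanishes Rᵐᵒᵖ ((W.P (n + 1)) ⧸ LinearMap.range (W.d n)) T)


/-! ## Vanishing of `Ext` between modules -/

section ExtZero

open CategoryTheory (ShortComplex) in
/-- The short complex attached to an exact pair of linear maps. -/
abbrev moduleShortComplex {A : Type u} [Ring A] {X Y Z : Type u}
    [AddCommGroup X] [Module A X] [AddCommGroup Y] [Module A Y] [AddCommGroup Z] [Module A Z]
    (f : X →ₗ[A] Y) (g : Y →ₗ[A] Z) (h : Function.Exact f g) :
    ShortComplex (ModuleCat.{u} A) :=
  ShortComplex.mk (ModuleCat.ofHom f) (ModuleCat.ofHom g) (by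
    ext x
    exact h.apply_apply_eq_zero x)

theorem moduleShortComplex_shortExact {A : Type u} [Ring A] {X Y Z : Type u}
    [AddCommGroup X] [Module A X] [AddCommGroup Y] [Module A Y] [AddCommGroup Z] [Module A Z]
    {f : X →ₗ[A] Y} {g : Y →ₗ[A] Z} (hf : Injective f) (h : Function.Exact f g)
    (hg : Surjective g) : (moduleShortComplex f g h).ShortExact where
  exact := (CategoryTheory.ShortComplex.ShortExact.moduleCat_exact_iff_function_exact _).2 h
  mono_f := (ModuleCat.mono_iff_injective _).2 hf
  epi_g := (ModuleCat.epi_iff_surjective _).2 hg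

/-- `ExtZero A X Y n` says that `Ext^n_A(X, Y) = 0`. -/
def ExtZero (A : Type u) [Ring A] (X Y : Type u) [AddCommGroup X] [Module A X]
    [AddCommGroup Y] [Module A Y] (n : ℕ) : Prop :=
  Subsingleton (CategoryTheory.Abelian.Ext (ModuleCat.of A X) (ModuleCat.of A Y) n)

namespace ExtZero

open CategoryTheory.Abelian
open scoped CategoryTheory

variable {A : Type u} [Ring A] {W X Y Z : Type u}
  [AddCommGroup W] [Module A W] [AddCommGroup X] [Module A X]
  [AddCommGroup Y] [Module A Y] [AddCommGroup Z] [Module A Z]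

theorem of_projective (h : Module.Projective A X) (n : ℕ) : ExtZero A X Y (n + 1) := by
  have : CategoryTheory.Projective (ModuleCat.of A X) := (IsProjective.iff_projective X).1 h
  exact Ext.subsingleton_of_projective _ _ n

theorem of_injective (h : Module.Injective A Y) (n : ℕ) : ExtZero A X Y (n + 1) := by
  have : CategoryTheory.Injective (ModuleCat.of A Y) :=
    Module.injective_object_of_injective_module A Y
  exact Ext.subsingleton_of_injective _ _ n

variable {f : X →ₗ[A] Y} {g : Y →ₗ[A] Z}

theorem contra_left (hf : Injective f) (h : Function.Exact f g) (hg : Surjective g) {n : ℕ}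
    (h₂ : ExtZero A Y W n) (h₃ : ExtZero A Z W (n + 1)) : ExtZero A X W n := by
  refine subsingleton_of_forall_eq 0 fun x => ?_
  obtain ⟨y, rfl⟩ := Ext.contravariant_sequence_exact₁
    (moduleShortComplex_shortExact hf h hg) (ModuleCat.of A W) x (add_comm 1 n)
    (@Subsingleton.elim _ h₃ _ _)
  rw [@Subsingleton.elim _ h₂ y 0, Ext.comp_zero]

theorem contra_right (hf : Injective f) (h : Function.Exact f g) (hg : Surjective g) {n : ℕ}
    (h₁ : ExtZero A X W n) (h₂ : ExtZero A Y W (n + 1)) : ExtZero A Z W (n + 1) := by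
  refine subsingleton_of_forall_eq 0 fun x => ?_
  obtain ⟨y, rfl⟩ := Ext.contravariant_sequence_exact₃
    (moduleShortComplex_shortExact hf h hg) (ModuleCat.of A W) x
    (@Subsingleton.elim _ h₂ _ _) (add_comm 1 n)
  rw [@Subsingleton.elim _ h₁ y 0, Ext.comp_zero]

theorem co_left (hf : Injective f) (h : Function.Exact f g) (hg : Surjective g) {n : ℕ}
    (h₃ : ExtZero A W Z n) (h₂ : ExtZero A W Y (n + 1)) : ExtZero A W X (n + 1) := by
  refine subsingleton_of_forall_eq 0 fun x => ?_
  obtain ⟨y, rfl⟩ := Ext.covariant_sequence_exact₁ (ModuleCat.of A W)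
    (moduleShortComplex_shortExact hf h hg) x (@Subsingleton.elim _ h₂ _ _) rfl
  rw [@Subsingleton.elim _ h₃ y 0, Ext.zero_comp]

theorem co_right (hf : Injective f) (h : Function.Exact f g) (hg : Surjective g) {n : ℕ}
    (h₂ : ExtZero A W Y n) (h₁ : ExtZero A W X (n + 1)) : ExtZero A W Z n := by
  refine subsingleton_of_forall_eq 0 fun x => ?_
  obtain ⟨y, rfl⟩ := Ext.covariant_sequence_exact₃ (ModuleCat.of A W)
    (moduleShortComplex_shortExact hf h hg) x rfl (@Subsingleton.elim _ h₁ _ _)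
  rw [@Subsingleton.elim _ h₂ y 0, Ext.zero_comp]

theorem exists_extension (hf : Injective f) (h : Function.Exact f g) (hg : Surjective g)
    (h₃ : ExtZero A Z W 1) (k : X →ₗ[A] W) : ∃ l : Y →ₗ[A] W, l.comp f = k := by
  obtain ⟨y, hy⟩ := Ext.contravariant_sequence_exact₁
    (moduleShortComplex_shortExact hf h hg) (ModuleCat.of A W) (Ext.mk₀ (ModuleCat.ofHom k))
    (add_comm 1 0) (@Subsingleton.elim _ h₃ _ _)
  obtain ⟨l, rfl⟩ := (Ext.mk₀_bijective _ _).2 y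
  rw [Ext.mk₀_comp_mk₀] at hy
  exact ⟨l.hom, congrArg ModuleCat.Hom.hom ((Ext.mk₀_bijective _ _).1 hy)⟩

theorem exists_lift (hf : Injective f) (h : Function.Exact f g) (hg : Surjective g)
    (h₁ : ExtZero A W X 1) (k : W →ₗ[A] Z) : ∃ l : W →ₗ[A] Y, g.comp l = k := by
  obtain ⟨y, hy⟩ := Ext.covariant_sequence_exact₃ (ModuleCat.of A W)
    (moduleShortComplex_shortExact hf h hg) (Ext.mk₀ (ModuleCat.ofHom k))
    (zero_add 1) (@Subsingleton.elim _ h₁ _ _)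
  obtain ⟨l, rfl⟩ := (Ext.mk₀_bijective _ _).2 y
  rw [Ext.mk₀_comp_mk₀] at hy
  exact ⟨l.hom, congrArg ModuleCat.Hom.hom ((Ext.mk₀_bijective _ _).1 hy)⟩

theorem of_extension (hf : Injective f) (h : Function.Exact f g) (hg : Surjective g)
    (h₂ : ExtZero A Y W 1) (H : ∀ k : X →ₗ[A] W, ∃ l : Y →ₗ[A] W, l.comp f = k) :
    ExtZero A Z W 1 := by
  refine subsingleton_of_forall_eq 0 fun x => ?_
  have hS := moduleShortComplex_shortExact hf h hg
  obtain ⟨y, rfl⟩ := Ext.contravariant_sequence_exact₃ hS (ModuleCat.of A W) x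
    (@Subsingleton.elim _ h₂ _ _) (add_comm 1 0)
  obtain ⟨k, rfl⟩ := (Ext.mk₀_bijective _ _).2 y
  obtain ⟨l, hl⟩ := H k.hom
  have hk : k = (moduleShortComplex f g h).f ≫ ModuleCat.ofHom l := by
    ext x
    exact (LinearMap.congr_fun hl x).symm
  rw [hk, ← Ext.mk₀_comp_mk₀, hS.extClass_comp_assoc]

theorem of_lift (hf : Injective f) (h : Function.Exact f g) (hg : Surjective g)
    (h₂ : ExtZero A W Y 1) (H : ∀ k : W →ₗ[A] Z, ∃ l : W →ₗ[A] Y, g.comp l = k) :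
    ExtZero A W X 1 := by
  refine subsingleton_of_forall_eq 0 fun x => ?_
  have hS := moduleShortComplex_shortExact hf h hg
  obtain ⟨y, rfl⟩ := Ext.covariant_sequence_exact₁ (ModuleCat.of A W) hS x
    (@Subsingleton.elim _ h₂ _ _) (zero_add 1)
  obtain ⟨k, rfl⟩ := (Ext.mk₀_bijective _ _).2 y
  obtain ⟨l, hl⟩ := H k.hom
  have hk : k = ModuleCat.ofHom l ≫ (moduleShortComplex f g h).g := by
    ext x
    exact (LinearMap.congr_fun hl x).symm
  rw [hk, ← Ext.mk₀_comp_mk₀, Ext.comp_assoc_of_second_deg_zero, hS.comp_extClass, Ext.comp_zero]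

end ExtZero

end ExtZero

/-! ## Projective resolutions compute vanishing of `Ext` -/

namespace ResolutionData

variable {A : Type u} [Ring A] {X : Type u} [AddCommGroup X] [Module A X]

/-- The resolution of the first syzygy obtained by truncating a resolution. -/
def shift (Q : ResolutionData A X) (h : Function.Exact (Q.d 0) Q.ε) :
    ResolutionData A (LinearMap.ker Q.ε) where
  P n := Q.P (n + 1)
  instAdd n := Q.instAdd (n + 1)
  instMod n := Q.instMod (n + 1)
  d n := Q.d (n + 1)
  ε := (Q.d 0).codRestrict _ fun x => h.apply_apply_eq_zero x

namespace IsProjResolution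

variable {Q : ResolutionData A X} (hQ : Q.IsProjResolution)
include hQ

theorem shift_surjective : Surjective (Q.shift hQ.exact0).ε := by
  rintro ⟨x, hx⟩
  obtain ⟨y, rfl⟩ := (hQ.exact0 x).1 hx
  exact ⟨y, rfl⟩

theorem shift : (Q.shift hQ.exact0).IsProjResolution where
  proj n := hQ.proj (n + 1)
  surj := hQ.shift_surjective
  exact0 x := by
    refine Iff.trans ?_ (hQ.exactSucc 0 x)
    exact Subtype.ext_iff
  exactSucc n := hQ.exactSucc (n + 1)

end IsProjResolution

theorem IsProjResolution.extZero_iff {Y : Type u} [AddCommGroup Y] [Module A Y] (n : ℕ)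
    {X : Type u} [AddCommGroup X] [Module A X] {Q : ResolutionData A X}
    (hQ : Q.IsProjResolution) :
    ExtZero A X Y (n + 1) ↔ Function.Exact
      (fun f : Q.P n →ₗ[A] Y => f.comp (Q.d n))
      (fun f : Q.P (n + 1) →ₗ[A] Y => f.comp (Q.d (n + 1))) := by
  induction n generalizing X with
  | zero =>
    constructor
    · intro h f
      constructor
      · intro hf
        obtain ⟨v, hv⟩ : ∃ v : LinearMap.ker Q.ε →ₗ[A] Y,
            v.comp (Q.shift hQ.exact0).ε = f := by
          have hle : LinearMap.ker (Q.shift hQ.exact0).ε ≤ LinearMap.ker f := by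
            intro x hx
            obtain ⟨y, rfl⟩ := (hQ.shift.exact0 x).1 hx
            exact LinearMap.congr_fun hf y
          refine ⟨((LinearMap.ker (Q.shift hQ.exact0).ε).liftQ f hle).comp
            ((Q.shift hQ.exact0).ε.quotKerEquivOfSurjective
              hQ.shift_surjective).symm.toLinearMap, ?_⟩
          ext x
          have : ((Q.shift hQ.exact0).ε.quotKerEquivOfSurjective
              hQ.shift_surjective).symm ((Q.shift hQ.exact0).ε x) = Submodule.Quotient.mk x := by
            rw [LinearEquiv.symm_apply_eq]
            rfl
          simp only [LinearMap.comp_apply, LinearEquiv.coe_coe]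
          rw [this]
          rfl
        obtain ⟨l, hl⟩ := ExtZero.exists_extension (Submodule.injective_subtype _)
          (LinearMap.exact_subtype_ker_map _) hQ.surj h v
        refine ⟨l, ?_⟩
        rw [← hv, ← hl]
        rfl
      · rintro ⟨g, rfl⟩
        ext x
        show g (Q.d 0 (Q.d 1 x)) = 0
        rw [(hQ.exactSucc 0).apply_apply_eq_zero, map_zero]
    · intro h
      refine ExtZero.of_extension (Submodule.injective_subtype _)
        (LinearMap.exact_subtype_ker_map _) hQ.surj (ExtZero.of_projective (hQ.proj 0) 0) fun k => ?_
      obtain ⟨l, hl⟩ := (h (k.comp (Q.shift hQ.exact0).ε)).1 (by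
        ext x
        exact (congrArg k (hQ.shift.exact0.apply_apply_eq_zero x)).trans (map_zero k))
      refine ⟨l, LinearMap.ext fun x => ?_⟩
      obtain ⟨y, rfl⟩ := hQ.shift_surjective x
      exact LinearMap.congr_fun hl y
  | succ n ih =>
    refine Iff.trans ?_ (ih hQ.shift)
    constructor
    · intro h
      exact ExtZero.contra_left (Submodule.injective_subtype _) (LinearMap.exact_subtype_ker_map _) hQ.surj
        (ExtZero.of_projective (hQ.proj 0) n) h
    · intro h
      exact ExtZero.contra_right (Submodule.injective_subtype _) (LinearMap.exact_subtype_ker_map _) hQ.surj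
        h (ExtZero.of_projective (hQ.proj 0) (n + 1))

end ResolutionData

/-- The iterated kernels of the canonical free presentations of a module. -/
def freeSyzygy (A : Type u) [Ring A] (X : ModuleCat.{u} A) : ℕ → ModuleCat.{u} A
  | 0 => X
  | n + 1 => ModuleCat.of A (LinearMap.ker
      (Finsupp.linearCombination A (id : freeSyzygy A X n → freeSyzygy A X n)))

/-- The canonical free resolution of a module. -/
def freeResolution (A : Type u) [Ring A] (X : Type u) [AddCommGroup X] [Module A X] :
    ResolutionData A X where
  P n := freeSyzygy A (ModuleCat.of A X) n →₀ A
  d n := (LinearMap.ker (Finsupp.linearCombination A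
      (id : freeSyzygy A (ModuleCat.of A X) n → _))).subtype.comp
    (Finsupp.linearCombination A (id : freeSyzygy A (ModuleCat.of A X) (n + 1) → _))
  ε := Finsupp.linearCombination A (id : freeSyzygy A (ModuleCat.of A X) 0 → _)

theorem freeResolution_isProjResolution (A : Type u) [Ring A] (X : Type u) [AddCommGroup X]
    [Module A X] : (freeResolution A X).IsProjResolution := by
  have key (n : ℕ) : Surjective (Finsupp.linearCombination A
      (id : freeSyzygy A (ModuleCat.of A X) n → _)) :=
    Finsupp.linearCombination_id_surjective A _
  have key' (n : ℕ) : Function.Exact ((freeResolution A X).d n) (Finsupp.linearCombination A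
      (id : freeSyzygy A (ModuleCat.of A X) n → _)) := by
    intro x
    constructor
    · intro hx
      obtain ⟨y, hy⟩ := key (n + 1) ⟨x, hx⟩
      exact ⟨y, congrArg Subtype.val hy⟩
    · rintro ⟨y, rfl⟩
      exact (Finsupp.linearCombination A
        (id : freeSyzygy A (ModuleCat.of A X) (n + 1) → _) y).2
  refine ⟨fun n => ?_, key 0, key' 0, fun n x => ?_⟩
  · exact Module.Projective.of_free (R := A) (P := freeSyzygy A (ModuleCat.of A X) n →₀ A)
  · refine Iff.trans ?_ (key' (n + 1) x)
    exact Submodule.coe_eq_zero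

theorem Module.Baer.exists_factor {A : Type*} [Ring A] {E X Y Z : Type*}
    [AddCommGroup E] [Module A E] [AddCommGroup X] [Module A X]
    [AddCommGroup Y] [Module A Y] [AddCommGroup Z] [Module A Z] (hE : Module.Baer A E)
    {f : X →ₗ[A] Y} {g : Y →ₗ[A] Z} (h : Function.Exact f g) (u : Y →ₗ[A] E)
    (hu : u.comp f = 0) : ∃ v : Z →ₗ[A] E, v.comp g = u := by
  have hle : LinearMap.ker g ≤ LinearMap.ker u := by
    intro x hx
    obtain ⟨y, rfl⟩ := (h x).1 hx
    exact LinearMap.congr_fun hu y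
  obtain ⟨v, hv⟩ := hE.extension_property (LinearMap.range g).subtype
    (Submodule.injective_subtype _)
    (((LinearMap.ker g).liftQ u hle).comp g.quotKerEquivRange.symm.toLinearMap)
  refine ⟨v, LinearMap.ext fun x => ?_⟩
  have h1 := LinearMap.congr_fun hv (g.quotKerEquivRange (Submodule.Quotient.mk x))
  simpa using h1

theorem CharacterModule.exists_factor {X Y Z : Type*} [AddCommGroup X] [AddCommGroup Y]
    [AddCommGroup Z] {f : X →+ Y} {g : Y →+ Z} (h : Function.Exact f g) (u : CharacterModule Y)
    (hu : ∀ x, u (f x) = 0) : ∃ v : CharacterModule Z, ∀ y, v (g y) = u y := by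
  obtain ⟨v, hv⟩ := (Module.Baer.of_divisible (AddCircle (1 : ℚ))).exists_factor
    (f := f.toIntLinearMap) (g := g.toIntLinearMap) h (AddMonoidHom.toIntLinearMap u)
    (LinearMap.ext hu)
  exact ⟨v.toAddMonoidHom, fun y => LinearMap.congr_fun hv y⟩

/-- A pair of additive maps is exact as soon as it is exact on characters. -/
theorem exact_of_characterModule {X Y Z : Type*} [AddCommGroup X] [AddCommGroup Y]
    [AddCommGroup Z] {f : X →+ Y} {g : Y →+ Z}
    (h₀ : ∀ v : CharacterModule Z, ∀ x, v (g (f x)) = 0)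
    (h : ∀ u : CharacterModule Y, (∀ x, u (f x) = 0) →
      ∃ v : CharacterModule Z, ∀ y, v (g y) = u y) : Function.Exact f g := by
  intro y
  constructor
  · intro hy
    suffices (QuotientAddGroup.mk y : Y ⧸ f.range) = 0 by
      simpa [QuotientAddGroup.eq_zero_iff] using this
    refine CharacterModule.eq_zero_of_character_apply fun c => ?_
    let u : CharacterModule Y := AddMonoidHom.comp (c : (Y ⧸ f.range) →+ _)
      (QuotientAddGroup.mk' f.range)
    obtain ⟨v, hv⟩ := h u fun x => by
      have hx : (QuotientAddGroup.mk (f x) : Y ⧸ f.range) = 0 :=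
        (QuotientAddGroup.eq_zero_iff _).2 ⟨x, rfl⟩
      exact (congrArg c hx).trans (map_zero c)
    exact (hv y).symm.trans (by rw [hy, map_zero])
  · rintro ⟨x, rfl⟩
    exact CharacterModule.eq_zero_of_character_apply fun c => h₀ c x

/-! ## Character modules over noncommutative rings and the tensor product -/

section CharacterModuleOp

variable {S : Type*} [Ring S] {T : Type u} [AddCommGroup T] [Module S T]

instance characterModuleOpSMul : SMul Sᵐᵒᵖ (CharacterModule T) :=
  ⟨fun σ c => AddMonoidHom.comp (c : T →+ _) (DistribSMul.toAddMonoidHom T σ.unop)⟩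

instance characterModuleOpModule : Module Sᵐᵒᵖ (CharacterModule T) where
  one_smul c := CharacterModule.ext _ fun t => congrArg c (one_smul S t)
  mul_smul a b c := CharacterModule.ext _ fun t => congrArg c (mul_smul b.unop a.unop t)
  smul_zero _ := rfl
  smul_add _ _ _ := rfl
  add_smul a b c := CharacterModule.ext _ fun t =>
    (congrArg c (add_smul a.unop b.unop t)).trans (map_add c _ _)
  zero_smul c := CharacterModule.ext _ fun t => (congrArg c (zero_smul S t)).trans (map_zero c)

/-- The map induced on character modules by a map of left modules. -/
def characterMap {T' : Type u} [AddCommGroup T'] [Module S T'] (f : T →ₗ[S] T') :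
    CharacterModule T' →ₗ[Sᵐᵒᵖ] CharacterModule T where
  toFun c := AddMonoidHom.comp (c : T' →+ _) f.toAddMonoidHom
  map_add' _ _ := rfl
  map_smul' σ c := CharacterModule.ext _ fun t => (congrArg c (f.map_smul σ.unop t)).symm

theorem characterMap_injective {T' : Type u} [AddCommGroup T'] [Module S T'] {f : T →ₗ[S] T'}
    (hf : Surjective f) : Injective (characterMap f) := by
  intro c c' h
  refine CharacterModule.ext _ fun t => ?_
  obtain ⟨t, rfl⟩ := hf t
  exact DFunLike.congr_fun h t

theorem characterMap_surjective {T' : Type u} [AddCommGroup T'] [Module S T'] {f : T →ₗ[S] T'}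
    (hf : Injective f) : Surjective (characterMap f) := by
  intro c
  obtain ⟨c', h⟩ := (Module.Baer.of_divisible (AddCircle (1 : ℚ))).extension_property_addMonoidHom
    f.toAddMonoidHom hf c
  exact ⟨c', h⟩

theorem characterMap_exact {T' T'' : Type u} [AddCommGroup T'] [Module S T'] [AddCommGroup T'']
    [Module S T''] {f : T →ₗ[S] T'} {g : T' →ₗ[S] T''} (h : Function.Exact f g) :
    Function.Exact (characterMap g) (characterMap f) := by
  intro c
  constructor
  · intro hc
    obtain ⟨v, hv⟩ := CharacterModule.exists_factor (f := f.toAddMonoidHom)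
      (g := g.toAddMonoidHom) h c fun x => DFunLike.congr_fun hc x
    exact ⟨v, CharacterModule.ext _ hv⟩
  · rintro ⟨v, rfl⟩
    refine CharacterModule.ext _ fun t => ?_
    exact (congrArg v (h.apply_apply_eq_zero t)).trans (map_zero v)

end CharacterModuleOp

section CharacterModuleOp

variable {S : Type u} [Ring S] {T : Type u} [AddCommGroup T] [Module S T]

/-- The character module of a projective left module is an injective right module. -/
theorem characterModule_injective (hT : Module.Projective S T) :
    Module.Injective Sᵐᵒᵖ (CharacterModule T) where
  out X Y _ _ _ _ f hf g := by
    let leftModule (Z : Type u) [AddCommGroup Z] [Module Sᵐᵒᵖ Z] :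
        Module S (CharacterModule Z) :=
      Module.compHom (CharacterModule Z) (RingEquiv.opOp S).toRingHom
    let := leftModule X
    let := leftModule Y
    have smul_apply (Z : Type u) [AddCommGroup Z] [Module Sᵐᵒᵖ Z] (s : S)
        (c : CharacterModule Z) (z : Z) :
        (letI := leftModule Z; s • c) z = c (op s • z) := rfl
    let F : CharacterModule Y →ₗ[S] CharacterModule X :=
      { toFun := characterMap f
        map_add' := map_add _
        map_smul' := fun s c => (characterMap f).map_smul (op (op s)) c }
    let G : T →ₗ[S] CharacterModule X :=
      { toFun := fun t => AddMonoidHom.mk' (fun x => g x t) fun x y => by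
          rw [map_add]
          rfl
        map_add' := fun t t' => CharacterModule.ext _ fun x => map_add (g x) t t'
        map_smul' := fun s t => CharacterModule.ext _ fun x =>
          (DFunLike.congr_fun (g.map_smul (op s) x) t).symm }
    obtain ⟨H, hH⟩ := Module.projective_lifting_property F G (characterMap_surjective hf)
    refine ⟨{ toFun := fun y => AddMonoidHom.mk' (fun t => H t y) fun t t' => by
                rw [map_add]
                rfl
              map_add' := fun y y' => CharacterModule.ext _ fun t => map_add (H t) y y'
              map_smul' := fun σ y => CharacterModule.ext _ fun t =>
                (DFunLike.congr_fun (H.map_smul σ.unop t) y).symm }, fun x => ?_⟩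
    refine CharacterModule.ext _ fun t => ?_
    exact DFunLike.congr_fun (LinearMap.congr_fun hH t) x

/-- A projective resolution of `K` computes `Ext` into the character module of `K`. -/
theorem ResolutionData.IsProjResolution.extZero_characterModule {N : Type u} [AddCommGroup N]
    [Module Sᵐᵒᵖ N] (n : ℕ) {K : Type u} [AddCommGroup K] [Module S K] {Q : ResolutionData S K}
    (hQ : Q.IsProjResolution)
    (h : ∀ φ : N →ₗ[Sᵐᵒᵖ] CharacterModule (Q.P (n + 1)),
      (characterMap (Q.d (n + 1))).comp φ = 0 →
        ∃ ψ : N →ₗ[Sᵐᵒᵖ] CharacterModule (Q.P n), (characterMap (Q.d n)).comp ψ = φ) :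
    ExtZero Sᵐᵒᵖ N (CharacterModule K) (n + 1) := by
  have h₁ := characterMap_injective hQ.surj
  have h₂ := characterMap_exact (LinearMap.exact_subtype_ker_map Q.ε)
  have h₃ := characterMap_surjective (Submodule.injective_subtype (LinearMap.ker Q.ε))
  have hi := characterModule_injective (hQ.proj 0)
  induction n generalizing K with
  | zero =>
    refine ExtZero.of_lift h₁ h₂ h₃ (ExtZero.of_injective hi 0) fun k => ?_
    obtain ⟨ψ, hψ⟩ := h ((characterMap (Q.shift hQ.exact0).ε).comp k) (by
      refine LinearMap.ext fun x => CharacterModule.ext _ fun p => ?_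
      exact (congrArg (k x) (hQ.shift.exact0.apply_apply_eq_zero p)).trans (map_zero (k x)))
    refine ⟨ψ, LinearMap.ext fun x => ?_⟩
    exact characterMap_injective hQ.shift_surjective (LinearMap.congr_fun hψ x)
  | succ n ih =>
    refine ExtZero.co_left h₁ h₂ h₃ (ih hQ.shift h ?_ ?_ ?_ ?_) (ExtZero.of_injective hi _)
    · exact characterMap_injective hQ.shift.surj
    · exact characterMap_exact (LinearMap.exact_subtype_ker_map _)
    · exact characterMap_surjective (Submodule.injective_subtype _)
    · exact characterModule_injective (hQ.shift.proj 0)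

end CharacterModuleOp

namespace MTensor

variable {S : Type u} [Ring S] {N : Type u} [AddCommGroup N] [Module Sᵐᵒᵖ N]
  {T : Type u} [AddCommGroup T] [Module S T]

theorem mk_add_left (n n' : N) (t : T) :
    (MTensor.mk (n + n') t : MTensor S N T) = MTensor.mk n t + MTensor.mk n' t :=
  congrArg QuotientAddGroup.mk (TensorProduct.tmul_add t n n')

theorem mk_add (n : N) (t t' : T) :
    (MTensor.mk n (t + t') : MTensor S N T) = MTensor.mk n t + MTensor.mk n t' :=
  congrArg QuotientAddGroup.mk (TensorProduct.add_tmul t t' n)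

theorem mk_smul (n : N) (s : S) (t : T) :
    (MTensor.mk n (s • t) : MTensor S N T) = MTensor.mk (op s • n) t := by
  refine QuotientAddGroup.eq_iff_sub_mem.2 ?_
  exact AddSubgroup.subset_closure ⟨s, t, n, rfl⟩

theorem addHom_ext {D : Type*} [AddCommGroup D] {f g : MTensor S N T →+ D}
    (h : ∀ n t, f (MTensor.mk n t) = g (MTensor.mk n t)) : f = g := by
  refine QuotientAddGroup.addMonoidHom_ext _ ?_
  refine AddMonoidHom.ext fun x => ?_
  induction x with
  | zero => rw [map_zero, map_zero]
  | tmul t n => exact h n t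
  | add x y hx hy => rw [map_add, map_add, hx, hy]

/-- A character of `N ⊗_S T` yields a map from `N` to the character module of `T`. -/
def curry (c : CharacterModule (MTensor S N T)) : N →ₗ[Sᵐᵒᵖ] CharacterModule T where
  toFun n := AddMonoidHom.mk' (fun t => c (MTensor.mk n t)) fun t t' => by
    rw [mk_add, map_add]
  map_add' n n' := CharacterModule.ext _ fun t =>
    (congrArg c (mk_add_left n n' t)).trans (map_add c _ _)
  map_smul' σ n := CharacterModule.ext _ fun t => (congrArg c (mk_smul n σ.unop t)).symm

/-- A map from `N` to the character module of `T` yields a character of `N ⊗_S T`. -/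
def uncurry (f : N →ₗ[Sᵐᵒᵖ] CharacterModule T) : CharacterModule (MTensor S N T) :=
  QuotientAddGroup.lift (mtRel S N T)
    (TensorProduct.liftAddHom
      (AddMonoidHom.mk' (fun t => AddMonoidHom.mk' (fun n => f n t) fun n n' => by
          rw [map_add]
          rfl)
        fun t t' => AddMonoidHom.ext fun n => map_add (f n) t t')
      (fun z t n => by
        show f n (z • t) = f (z • n) t
        rw [map_zsmul, map_zsmul]
        rfl))
    (by
      refine (AddSubgroup.closure_le _).2 ?_
      rintro x ⟨s, t, n, rfl⟩
      simp only [SetLike.mem_coe, AddMonoidHom.mem_ker, map_sub,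
        TensorProduct.liftAddHom_tmul]
      exact sub_eq_zero.2 (DFunLike.congr_fun (f.map_smul (op s) n) t).symm)

theorem curry_bijective : Bijective (curry (S := S) (N := N) (T := T)) := by
  refine ⟨fun c c' h => ?_, fun f => ⟨uncurry f, rfl⟩⟩
  exact addHom_ext fun n t => DFunLike.congr_fun (LinearMap.congr_fun h n) t

theorem subsingleton_of_hom (h : ∀ f : N →ₗ[Sᵐᵒᵖ] CharacterModule T, f = 0) :
    Subsingleton (MTensor S N T) := by
  refine subsingleton_of_forall_eq (0 : MTensor S N T) fun x => ?_
  refine CharacterModule.eq_zero_of_character_apply fun c => ?_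
  have : c = 0 := curry_bijective.1 ((h (curry c)).trans (h (curry 0)).symm)
  rw [this]
  rfl

end MTensor

/-- `Tor^S_i(N, T)` vanishes when `Ext^i` from `N` to the character module of `T` does. -/
theorem torVanishAll_of_extZero {S : Type u} [Ring S] {N : Type u} [AddCommGroup N]
    [Module Sᵐᵒᵖ N] {T : Type u} [AddCommGroup T] [Module S T]
    (h : ∀ i, ExtZero Sᵐᵒᵖ N (CharacterModule T) (i + 1)) : TorVanishAll S N T := by
  have hQ := freeResolution_isProjResolution Sᵐᵒᵖ N
  refine ⟨freeResolution Sᵐᵒᵖ N, hQ, fun j => exact_of_characterModule ?_ ?_⟩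
  · intro v x
    have : (AddMonoidHom.comp (v : _ →+ _) (MTensor.map ((freeResolution Sᵐᵒᵖ N).d j))).comp
        (MTensor.map (T := T) ((freeResolution Sᵐᵒᵖ N).d (j + 1))) = 0 := by
      refine MTensor.addHom_ext fun n t => ?_
      show MTensor.curry v ((freeResolution Sᵐᵒᵖ N).d j
        ((freeResolution Sᵐᵒᵖ N).d (j + 1) n)) t = 0
      rw [(hQ.exactSucc j).apply_apply_eq_zero, map_zero]
      rfl
    exact DFunLike.congr_fun this x
  · intro c hc
    obtain ⟨v, hv⟩ := ((hQ.extZero_iff j).1 (h j) (MTensor.curry c)).1 (by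
      refine LinearMap.ext fun n => CharacterModule.ext _ fun t => ?_
      exact hc (MTensor.mk n t))
    refine ⟨MTensor.uncurry v, fun y => ?_⟩
    have : AddMonoidHom.comp (MTensor.uncurry v : _ →+ _)
        (MTensor.map ((freeResolution Sᵐᵒᵖ N).d j)) = c := by
      refine MTensor.addHom_ext fun n t => ?_
      exact DFunLike.congr_fun (LinearMap.congr_fun hv n) t
    exact DFunLike.congr_fun this y

/-! ## A description of the Bass class through character modules -/

section DualBass

variable (S R : Type u) [Ring S] [Ring R]
variable (T : Type u) [AddCommGroup T] [Module S T] [Module Rᵐᵒᵖ T] [SMulCommClass S Rᵐᵒᵖ T]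

/-- The transpose of the evaluation map: a character `χ` of `M` is sent to `f ↦ (t ↦ χ (f t))`. -/
def evalTranspose {M : Type u} [AddCommGroup M] [Module Rᵐᵒᵖ M] :
    CharacterModule M →+ ((T →ₗ[Rᵐᵒᵖ] M) →ₗ[Sᵐᵒᵖ] CharacterModule T) where
  toFun χ :=
    { toFun := fun f => AddMonoidHom.comp (χ : M →+ _) f.toAddMonoidHom
      map_add' := fun f g => CharacterModule.ext _ fun t => map_add χ (f t) (g t)
      map_smul' := fun _ _ => rfl }
  map_zero' := rfl
  map_add' _ _ := rfl

/-- The Bass class conditions, with the tensor products replaced by maps to the character module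
of `T`. -/
structure InDualBassClass (M : Type u) [AddCommGroup M] [Module Rᵐᵒᵖ M] : Prop where
  ext : ∀ i, ExtZero Rᵐᵒᵖ T M (i + 1)
  tor : ∀ i, ExtZero Sᵐᵒᵖ (T →ₗ[Rᵐᵒᵖ] M) (CharacterModule T) (i + 1)
  bij : Bijective (evalTranspose S R T (M := M))

variable {S R T}

theorem InDualBassClass.inBassClass (hW : IsWakamatsuTilting S R T) {M : Type u}
    [AddCommGroup M] [Module Rᵐᵒᵖ M] (h : InDualBassClass S R T M) : InBassClass S R T M where
  extVanish := by
    obtain ⟨Q, hQ, -⟩ := hW.fgProjResR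
    exact ⟨Q, hQ, fun j => (hQ.extZero_iff j).1 (h.ext j)⟩
  torVanish := torVanishAll_of_extZero h.tor
  nuBij := by
    refine (CharacterModule.dual_bijective_iff_bijective
      (f := (MTensor.nuFun S R T M).toIntLinearMap)).1 ?_
    refine (Function.Bijective.of_comp_iff' (MTensor.curry_bijective (S := S)) _).1 ?_
    exact h.bij

end DualBass

/-- A map vanishing on the kernel of a surjection factors through it. -/
theorem Function.Exact.exists_factor {A : Type*} [Ring A] {W X Y Z : Type*}
    [AddCommGroup W] [Module A W] [AddCommGroup X] [Module A X]
    [AddCommGroup Y] [Module A Y] [AddCommGroup Z] [Module A Z]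
    {f : X →ₗ[A] Y} {g : Y →ₗ[A] Z} (h : Function.Exact f g) (hg : Surjective g) (u : Y →ₗ[A] W)
    (hu : u.comp f = 0) : ∃ v : Z →ₗ[A] W, v.comp g = u := by
  have hle : LinearMap.ker g ≤ LinearMap.ker u := by
    rw [h.linearMap_ker_eq]
    rintro _ ⟨x, rfl⟩
    exact LinearMap.congr_fun hu x
  refine ⟨((LinearMap.ker g).liftQ u hle).comp (g.quotKerEquivOfSurjective hg).symm.toLinearMap,
    LinearMap.ext fun y => ?_⟩
  have : (g.quotKerEquivOfSurjective hg).symm (g y) = Submodule.Quotient.mk y :=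
    (LinearEquiv.symm_apply_eq _).2 rfl
  exact (congrArg ((LinearMap.ker g).liftQ u hle) this).trans (Submodule.liftQ_apply _ _ _)

section DualBassSequences

variable {S R : Type u} [Ring S] [Ring R]
variable {T : Type u} [AddCommGroup T] [Module S T] [Module Rᵐᵒᵖ T] [SMulCommClass S Rᵐᵒᵖ T]
variable {M B C : Type u} [AddCommGroup M] [Module Rᵐᵒᵖ M] [AddCommGroup B] [Module Rᵐᵒᵖ B]
  [AddCommGroup C] [Module Rᵐᵒᵖ C]

variable (S T) in
/-- Functoriality of the right `S`-module `Hom_R(T, M)` in `M`. -/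
def homMap (f : M →ₗ[Rᵐᵒᵖ] B) : (T →ₗ[Rᵐᵒᵖ] M) →ₗ[Sᵐᵒᵖ] (T →ₗ[Rᵐᵒᵖ] B) where
  toFun u := f.comp u
  map_add' u v := LinearMap.ext fun t => map_add f (u t) (v t)
  map_smul' _ _ := rfl

variable {f : M →ₗ[Rᵐᵒᵖ] B} {g : B →ₗ[Rᵐᵒᵖ] C}

theorem homMap_injective (hf : Injective f) : Injective (homMap S T f) := fun _ _ h =>
  LinearMap.ext fun t => hf (LinearMap.congr_fun h t)

theorem homMap_exact (hf : Injective f) (h : Function.Exact f g) :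
    Function.Exact (homMap S T f) (homMap S T g) := by
  intro k
  constructor
  · intro hk
    refine ⟨(LinearEquiv.ofInjective f hf).symm.toLinearMap.comp
      (k.codRestrict (LinearMap.range f) fun t => (h (k t)).1 (LinearMap.congr_fun hk t)),
      LinearMap.ext fun t => ?_⟩
    exact congrArg Subtype.val ((LinearEquiv.ofInjective f hf).apply_symm_apply _)
  · rintro ⟨k, rfl⟩
    exact LinearMap.ext fun t => h.apply_apply_eq_zero (k t)

theorem evalTranspose_injective_of_surjective (hg : Surjective g)
    (hB : Injective (evalTranspose S R T (M := B))) :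
    Injective (evalTranspose S R T (M := C)) := by
  intro χ χ' e
  exact characterMap_injective hg (hB (congrArg (fun k => k.comp (homMap S T g)) e))

/-- A right module `C` whose presentation `B → C` has injective transposed evaluation map has
`Hom_R(T, B) → Hom_R(T, C)` surjective, for tensorly faithful `T`. -/
theorem homMap_surjective_of_isTensorlyFaithful (htf : IsTensorlyFaithful S R T)
    (hg : Surjective g) (hB : Injective (evalTranspose S R T (M := B)))
    (hC : Surjective (evalTranspose S R T (M := C))) : Surjective (homMap S T g) := by
  rw [← LinearMap.range_eq_top, ← Submodule.Quotient.subsingleton_iff]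
  refine htf.2 _ (MTensor.subsingleton_of_hom fun k => ?_)
  obtain ⟨χ, hχ⟩ := hC (k.comp (LinearMap.range (homMap S T g)).mkQ)
  have h₀ : characterMap g χ = 0 := by
    refine hB (LinearMap.ext fun u => ?_)
    refine (LinearMap.congr_fun hχ (homMap S T g u)).trans ?_
    refine (congrArg k ((Submodule.Quotient.mk_eq_zero _).2 ⟨u, rfl⟩)).trans (map_zero k)
  have h₁ : χ = 0 := characterMap_injective hg h₀
  refine LinearMap.ext fun x => ?_
  obtain ⟨u, rfl⟩ := Submodule.mkQ_surjective _ x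
  refine (LinearMap.congr_fun hχ u).symm.trans ?_
  rw [h₁]
  rfl

/-- The class `InDualBassClass` is closed under kernels of surjections. -/
theorem InDualBassClass.of_exact (htf : IsTensorlyFaithful S R T) (hf : Injective f)
    (h : Function.Exact f g) (hg : Surjective g) (hB : InDualBassClass S R T B)
    (hC : InDualBassClass S R T C) : InDualBassClass S R T M := by
  have hs := homMap_surjective_of_isTensorlyFaithful htf hg hB.bij.1 hC.bij.2
  have hi := homMap_injective (S := S) (T := T) hf
  have he := homMap_exact (S := S) (T := T) hf h
  refine ⟨fun i => ?_, fun i => ?_, (injective_iff_map_eq_zero _).2 fun χ hχ => ?_, fun v => ?_⟩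
  · cases i with
    | zero => exact ExtZero.of_lift hf h hg (hB.ext 0) hs
    | succ i => exact ExtZero.co_left hf h hg (hC.ext i) (hB.ext (i + 1))
  · exact ExtZero.contra_left hi he hs (hB.tor i) (hC.tor (i + 1))
  · obtain ⟨β, rfl⟩ := characterMap_surjective hf χ
    obtain ⟨v, hv⟩ := he.exists_factor hs (evalTranspose S R T β) hχ
    obtain ⟨γ, rfl⟩ := hC.bij.2 v
    have hγ : characterMap g γ = β := hB.bij.1 hv
    rw [← hγ]
    exact (characterMap_exact h).apply_apply_eq_zero γ
  · obtain ⟨l, rfl⟩ := ExtZero.exists_extension hi he hs (hC.tor 0) v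
    obtain ⟨β, rfl⟩ := hB.bij.2 l
    exact ⟨characterMap f β, rfl⟩

end DualBassSequences

section InjectiveModules

variable {S R : Type u} [Ring S] [Ring R]
variable {T : Type u} [AddCommGroup T] [Module S T] [Module Rᵐᵒᵖ T] [SMulCommClass S Rᵐᵒᵖ T]
variable {E : Type u} [AddCommGroup E] [Module Rᵐᵒᵖ E]

variable (T E) in
/-- For a left `S`-module `P`, the map from the character module of `Hom_R(Hom_S(P, T), E)` to
`Hom_S(Hom_R(T, E), P^*)` sending `χ` to `u ↦ (p ↦ χ (h ↦ u (h p)))`. -/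
def biHomTranspose (P : Type u) [AddCommGroup P] [Module S P] :
    CharacterModule ((P →ₗ[S] T) →ₗ[Rᵐᵒᵖ] E) →+
      ((T →ₗ[Rᵐᵒᵖ] E) →ₗ[Sᵐᵒᵖ] CharacterModule P) where
  toFun χ :=
    { toFun := fun u => AddMonoidHom.mk' (fun p => χ (u.comp (LinearMap.applyₗ' Rᵐᵒᵖ p)))
        fun p p' => by
          rw [map_add, LinearMap.comp_add, map_add]
      map_add' := fun u v => CharacterModule.ext _ fun p => by
        refine Eq.trans (congrArg χ (LinearMap.add_comp _ _ _)) (map_add χ _ _)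
      map_smul' := fun σ u => CharacterModule.ext _ fun p =>
        congrArg χ (LinearMap.ext fun h => congrArg u (h.map_smul σ.unop p).symm) }
  map_zero' := rfl
  map_add' _ _ := rfl

/-- Scalars from a linear form `φ : P → S`, as a map `T → Hom_S(P, T)`. -/
def smulRightHom {P : Type u} [AddCommGroup P] [Module S P] (φ : P →ₗ[S] S) :
    T →ₗ[Rᵐᵒᵖ] (P →ₗ[S] T) where
  toFun t := φ.smulRight t
  map_add' t t' := LinearMap.ext fun p => smul_add (φ p) t t'
  map_smul' ρ t := LinearMap.ext fun p => smul_comm (φ p) ρ t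

theorem exists_dual_basis (P : Type u) [AddCommGroup P] [Module S P] [Module.Finite S P]
    [Module.Projective S P] :
    ∃ (n : ℕ) (x : Fin n → P) (φ : Fin n → P →ₗ[S] S), ∀ p, ∑ k, φ k p • x k = p := by
  obtain ⟨n, f, g, -, -, hfg⟩ := Module.Finite.exists_comp_eq_id_of_projective S P
  refine ⟨n, fun k => f fun j => if k = j then 1 else 0, fun k => (LinearMap.proj k).comp g,
    fun p => ?_⟩
  exact (LinearMap.pi_apply_eq_sum_univ f (g p)).symm.trans (LinearMap.congr_fun hfg p)

theorem biHomTranspose_bijective (P : Type u) [AddCommGroup P] [Module S P] [Module.Finite S P]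
    [Module.Projective S P] : Bijective (biHomTranspose (S := S) (R := R) T E P) := by
  obtain ⟨n, x, φ, hφ⟩ := exists_dual_basis (S := S) P
  refine ⟨(injective_iff_map_eq_zero _).2 fun χ hχ => ?_, fun w => ?_⟩
  · refine CharacterModule.ext _ fun v => ?_
    have hv : v = ∑ k, (v.comp (smulRightHom (φ k))).comp (LinearMap.applyₗ' Rᵐᵒᵖ (x k)) := by
      refine LinearMap.ext fun h => ?_
      have hh : h = ∑ k, (φ k).smulRight (h (x k)) := by
        refine LinearMap.ext fun p => ?_
        conv_lhs => rw [← hφ p]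
        simp
      conv_lhs => rw [hh]
      rw [map_sum, LinearMap.sum_apply]
      rfl
    rw [hv, map_sum]
    exact Finset.sum_eq_zero fun k _ => DFunLike.congr_fun
      (LinearMap.congr_fun hχ (v.comp (smulRightHom (φ k)))) (x k)
  · refine ⟨AddMonoidHom.mk' (fun v => ∑ k, w (v.comp (smulRightHom (φ k))) (x k)) fun v v' => ?_,
      LinearMap.ext fun u => CharacterModule.ext _ fun p => ?_⟩
    · rw [← Finset.sum_add_distrib]
      refine Finset.sum_congr rfl fun k _ => ?_
      rw [LinearMap.add_comp, map_add]
      rfl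
    · have h : ∑ k, w ((u.comp (LinearMap.applyₗ' Rᵐᵒᵖ p)).comp (smulRightHom (φ k))) (x k) =
          ∑ k, w u (φ k p • x k) := Finset.sum_congr rfl fun k _ =>
        DFunLike.congr_fun (w.map_smul (op (φ k p)) u) (x k)
      exact h.trans
        ((map_sum (w u) (fun k => φ k p • x k) _).symm.trans (congrArg (w u) (hφ p)))

theorem InDualBassClass.of_injective (hW : IsWakamatsuTilting S R T)
    (hE : Module.Injective Rᵐᵒᵖ E) : InDualBassClass S R T E := by
  have hB : Module.Baer Rᵐᵒᵖ E := Module.Baer.of_injective hE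
  obtain ⟨Q, hQ, hfin⟩ := hW.fgProjResS
  obtain ⟨Q', hQ', hex'⟩ := hW.extS
  have hex (n : ℕ) : Function.Exact (LinearMap.lcomp Rᵐᵒᵖ T (Q.d n))
      (LinearMap.lcomp Rᵐᵒᵖ T (Q.d (n + 1))) :=
    (hQ.extZero_iff n).1 ((hQ'.extZero_iff n).2 (hex' n))
  have := hQ.proj
  have hτ (n : ℕ) := biHomTranspose_bijective (S := S) (R := R) (T := T) (E := E) (Q.P n)
  have hα : Injective (LinearMap.toSpanSingleton Rᵐᵒᵖ (Q.P 0 →ₗ[S] T) Q.ε) := by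
    refine (injective_iff_map_eq_zero _).2 fun ρ hρ => unop_injective (hW.bijR.1 ?_)
    refine LinearMap.ext fun t => ?_
    obtain ⟨p, rfl⟩ := hQ.surj t
    exact (LinearMap.congr_fun hρ p).trans (zero_smul Rᵐᵒᵖ (Q.ε p)).symm
  have hα' : Function.Exact (LinearMap.toSpanSingleton Rᵐᵒᵖ (Q.P 0 →ₗ[S] T) Q.ε)
      (LinearMap.lcomp Rᵐᵒᵖ T (Q.d 0)) := by
    intro h
    constructor
    · intro hh
      obtain ⟨θ, rfl⟩ := hQ.exact0.exists_factor hQ.surj h hh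
      obtain ⟨r, rfl⟩ := hW.bijR.2 θ
      exact ⟨op r, rfl⟩
    · rintro ⟨ρ, rfl⟩
      refine LinearMap.ext fun p => ?_
      exact (congrArg (ρ • ·) (hQ.exact0.apply_apply_eq_zero p)).trans (smul_zero ρ)
  have hev : Surjective (LinearMap.applyₗ' ℤ Q.ε : ((Q.P 0 →ₗ[S] T) →ₗ[Rᵐᵒᵖ] E) →ₗ[ℤ] E) := by
    intro e
    obtain ⟨v, hv⟩ := hB.extension_property _ hα (LinearMap.toSpanSingleton Rᵐᵒᵖ E e)
    refine ⟨v, ?_⟩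
    simpa using LinearMap.congr_fun hv 1
  have hE₀ : Function.Exact (LinearMap.lcomp ℤ E (LinearMap.lcomp Rᵐᵒᵖ T (Q.d 0)))
      (LinearMap.applyₗ' ℤ Q.ε : ((Q.P 0 →ₗ[S] T) →ₗ[Rᵐᵒᵖ] E) →ₗ[ℤ] E) := by
    intro v
    constructor
    · intro hv
      refine hB.exists_factor hα' v (LinearMap.ext fun ρ => ?_)
      refine (v.map_smul ρ Q.ε).trans ?_
      exact (congrArg (ρ • ·) hv).trans (smul_zero ρ)
    · rintro ⟨v, rfl⟩
      have : LinearMap.lcomp Rᵐᵒᵖ T (Q.d 0) Q.ε = 0 :=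
        LinearMap.ext hQ.exact0.apply_apply_eq_zero
      exact (congrArg v this).trans (map_zero v)
  refine ⟨fun i => ExtZero.of_injective hE i, fun i => ?_,
    (injective_iff_map_eq_zero _).2 fun χ hχ => ?_, fun w => ?_⟩
  · refine hQ.extZero_characterModule i fun φ hφ => ?_
    obtain ⟨χ, rfl⟩ := (hτ (i + 1)).2 φ
    have hχ : characterMap (LinearMap.lcomp ℤ E (LinearMap.lcomp Rᵐᵒᵖ T (Q.d (i + 1)))) χ = 0 :=
      (hτ (i + 2)).1 hφ
    have hE' : Function.Exact (LinearMap.lcomp ℤ E (LinearMap.lcomp Rᵐᵒᵖ T (Q.d (i + 1))))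
        (LinearMap.lcomp ℤ E (LinearMap.lcomp Rᵐᵒᵖ T (Q.d i))) := by
      refine fun v => ⟨fun hv => hB.exists_factor (hex i) v hv, ?_⟩
      rintro ⟨v, rfl⟩
      refine LinearMap.ext fun h => ?_
      exact (congrArg v ((hex i).apply_apply_eq_zero h)).trans (map_zero v)
    obtain ⟨ψ, rfl⟩ := (characterMap_exact hE' χ).1 hχ
    exact ⟨biHomTranspose T E (Q.P i) ψ, rfl⟩
  · have h₀ : characterMap (LinearMap.applyₗ' ℤ Q.ε) χ = 0 :=
      (hτ 0).1 (congrArg (fun k => (characterMap Q.ε).comp k) hχ)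
    exact characterMap_injective hev h₀
  · obtain ⟨χ, hχ⟩ := (hτ 0).2 ((characterMap Q.ε).comp w)
    have h₀ : characterMap (LinearMap.lcomp ℤ E (LinearMap.lcomp Rᵐᵒᵖ T (Q.d 0))) χ = 0 := by
      refine (hτ 1).1 (LinearMap.ext fun u => ?_)
      refine (congrArg (characterMap (Q.d 0)) (LinearMap.congr_fun hχ u)).trans ?_
      exact (characterMap_exact hQ.exact0).apply_apply_eq_zero (w u)
    obtain ⟨ψ, rfl⟩ := (characterMap_exact hE₀ χ).1 h₀
    refine ⟨ψ, LinearMap.ext fun u => characterMap_injective hQ.surj ?_⟩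
    exact LinearMap.congr_fun hχ u

end InjectiveModules

/-! ## Gorenstein injective modules -/

theorem ExtZero.of_projDimLE {A : Type u} [Ring A] {Y : Type u} [AddCommGroup Y] [Module A Y]
    (n : ℕ) {X : ModuleCat.{u} A}
    (h : HasClassResolution A (fun P => Module.Projective A P) n X) (j : ℕ) :
    ExtZero A X Y (n + j + 1) := by
  induction n generalizing X with
  | zero => exact ExtZero.of_projective h _
  | succ n ih =>
    obtain ⟨e, he, hk⟩ := h
    rw [Nat.add_right_comm n 1 j]
    exact ExtZero.contra_right (Submodule.injective_subtype _)
      (LinearMap.exact_subtype_ker_map e.f) e.surj (ih hk) (ExtZero.of_projective he _)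

namespace ZComplex

variable {A : Type u} [Ring A] (C : ZComplex A)

/-- The corestriction of a differential to the next module of cycles. -/
def toCycles (hC : C.IsExact) (i : ℤ) : C.P i →ₗ[A] LinearMap.ker (C.d (i + 1)) :=
  (C.d i).codRestrict _ fun x => (hC i).apply_apply_eq_zero x

variable {C} (hC : C.IsExact)
include hC

theorem toCycles_surjective (i : ℤ) : Surjective (C.toCycles hC i) := by
  rintro ⟨y, hy⟩
  obtain ⟨x, rfl⟩ := (hC i y).1 hy
  exact ⟨x, rfl⟩

theorem toCycles_exact (i : ℤ) :
    Function.Exact (LinearMap.ker (C.d i)).subtype (C.toCycles hC i) := by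
  refine fun x => ⟨fun hx => ⟨⟨x, congrArg Subtype.val hx⟩, rfl⟩, ?_⟩
  rintro ⟨x, rfl⟩
  exact Subtype.ext x.2

/-- A module of finite projective dimension has no higher extensions by cycles of an exact
complex of injective modules. -/
theorem extZero_cycles_of_projDimLE (hI : ∀ i, Module.Injective A (C.P i)) {X : Type u}
    [AddCommGroup X] [Module A X] {n : ℕ} (hX : ProjDimLE A X n) (i : ℤ) (k : ℕ) :
    ExtZero A X (LinearMap.ker (C.d i)) (k + 1) := by
  have h (i : ℤ) (k : ℕ) := ExtZero.of_projDimLE (Y := LinearMap.ker (C.d i)) n hX k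
  clear hX
  induction n generalizing i k with
  | zero => simpa using h i k
  | succ n ih =>
    refine ih i k fun i k => ?_
    obtain ⟨i, rfl⟩ : ∃ j, i = j + 1 := ⟨i - 1, by ring⟩
    refine ExtZero.co_right (Submodule.injective_subtype _) (toCycles_exact hC i)
      (toCycles_surjective hC i) (ExtZero.of_injective (hI i) (n + k)) ?_
    simpa [Nat.add_right_comm n 1 k] using h i k

/-- Injective modules have no extensions by cycles of a totally acyclic complex of injective
modules. -/
theorem extZero_cycles_of_injective (hI : ∀ i, Module.Injective A (C.P i)) {X : Type u}
    [AddCommGroup X] [Module A X]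
    (hH : ∀ i, Function.Exact (fun f : X →ₗ[A] C.P i => (C.d i).comp f)
      (fun f : X →ₗ[A] C.P (i + 1) => (C.d (i + 1)).comp f)) (i : ℤ) (k : ℕ) :
    ExtZero A X (LinearMap.ker (C.d i)) (k + 1) := by
  induction k generalizing i with
  | zero =>
    refine ExtZero.of_lift (Submodule.injective_subtype _) (toCycles_exact hC i)
      (toCycles_surjective hC i) (ExtZero.of_injective (hI i) 0) fun k => ?_
    obtain ⟨l, hl⟩ := (hH i ((LinearMap.ker (C.d (i + 1))).subtype.comp k)).1
      (LinearMap.ext fun x => (k x).2)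
    exact ⟨l, LinearMap.ext fun x => Subtype.ext (LinearMap.congr_fun hl x)⟩
  | succ k ih =>
    exact ExtZero.co_left (Submodule.injective_subtype _) (toCycles_exact hC i)
      (toCycles_surjective hC i) (ih (i + 1)) (ExtZero.of_injective (hI i) (k + 1))

/-- A module of finite injective dimension has no higher extensions by cycles of a totally
acyclic complex of injective modules. -/
theorem extZero_cycles_of_injDimLE (hI : ∀ i, Module.Injective A (C.P i))
    (hH : ∀ (I : Type u) [AddCommGroup I] [Module A I], Module.Injective A I →
      ∀ i, Function.Exact
        (fun f : I →ₗ[A] C.P i => (C.d i).comp f)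
        (fun f : I →ₗ[A] C.P (i + 1) => (C.d (i + 1)).comp f))
    {n : ℕ} {X : ModuleCat.{u} A}
    (hX : HasClassCoresolution A (fun E => Module.Injective A E) n X) (i : ℤ) (k : ℕ) :
    ExtZero A X (LinearMap.ker (C.d i)) (k + 1) := by
  induction n generalizing X k with
  | zero => exact extZero_cycles_of_injective hC hI (hH X hX) i k
  | succ n ih =>
    obtain ⟨e, he, hk⟩ := hX
    exact ExtZero.contra_left e.inj (LinearMap.exact_map_mkQ_range e.f)
      (Submodule.mkQ_surjective _) (extZero_cycles_of_injective hC hI (hH e.E he) i k)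
      (ih hk (k + 1))

end ZComplex

section GorensteinInjective

variable {S R : Type u} [Ring S] [Ring R]
variable {T : Type u} [AddCommGroup T] [Module S T] [Module Rᵐᵒᵖ T] [SMulCommClass S Rᵐᵒᵖ T]

/-- The cycles of an exact complex of injective modules with no extensions by `T` satisfy the
conditions of the Bass class. -/
theorem InDualBassClass.of_cycles (hW : IsWakamatsuTilting S R T) {C : ZComplex Rᵐᵒᵖ}
    (hI : ∀ i, Module.Injective Rᵐᵒᵖ (C.P i)) (hC : C.IsExact)
    (hT : ∀ i k, ExtZero Rᵐᵒᵖ T (LinearMap.ker (C.d i)) (k + 1)) (i : ℤ) :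
    InDualBassClass S R T (LinearMap.ker (C.d i)) := by
  have hP (i : ℤ) : InDualBassClass S R T (C.P i) := .of_injective hW (hI i)
  have shift {p : ℤ → Prop} (h : ∀ i, p (i + 1)) (i : ℤ) : p i := by
    obtain ⟨i, rfl⟩ : ∃ j, i = j + 1 := ⟨i - 1, by ring⟩
    exact h i
  have hf (i : ℤ) := Submodule.injective_subtype (LinearMap.ker (C.d i))
  have hx (i : ℤ) := ZComplex.toCycles_exact hC i
  have hg (i : ℤ) := ZComplex.toCycles_surjective hC i
  have hs (i : ℤ) : Surjective (homMap S T (C.toCycles hC i)) := fun k =>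
    ExtZero.exists_lift (hf i) (hx i) (hg i) (hT i 0) k
  have hi (i : ℤ) := homMap_injective (S := S) (T := T) (hf i)
  have he (i : ℤ) := homMap_exact (S := S) (T := T) (hf i) (hx i)
  have inj : ∀ i, Injective (evalTranspose S R T (M := LinearMap.ker (C.d i))) :=
    shift fun i => evalTranspose_injective_of_surjective (hg i) (hP i).bij.1
  have surj : ∀ i, Surjective (evalTranspose S R T (M := LinearMap.ker (C.d i))) := by
    refine shift fun i w => ?_
    obtain ⟨β, hβ⟩ := (hP i).bij.2 (w.comp (homMap S T (C.toCycles hC i)))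
    have h₀ : characterMap (LinearMap.ker (C.d i)).subtype β = 0 := by
      refine inj i (LinearMap.ext fun u => ?_)
      refine (LinearMap.congr_fun hβ (homMap S T (LinearMap.ker (C.d i)).subtype u)).trans ?_
      exact (congrArg w ((he i).apply_apply_eq_zero u)).trans (map_zero w)
    obtain ⟨γ, rfl⟩ := (characterMap_exact (hx i) β).1 h₀
    refine ⟨γ, LinearMap.ext fun v => ?_⟩
    obtain ⟨u, rfl⟩ := hs i v
    exact LinearMap.congr_fun hβ u
  have tor (k : ℕ) :
      ∀ i, ExtZero Sᵐᵒᵖ (T →ₗ[Rᵐᵒᵖ] LinearMap.ker (C.d i)) (CharacterModule T) (k + 1) := by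
    induction k with
    | zero =>
      refine shift fun i => ExtZero.of_extension (hi i) (he i) (hs i) ((hP i).tor 0) fun k => ?_
      obtain ⟨χ, rfl⟩ := surj i k
      obtain ⟨β, rfl⟩ := characterMap_surjective (hf i) χ
      exact ⟨evalTranspose S R T β, rfl⟩
    | succ k ih =>
      exact shift fun i => ExtZero.contra_right (hi i) (he i) (hs i) (ih i) ((hP i).tor (k + 1))
  exact ⟨hT i, fun k => tor k i, inj i, surj i⟩

theorem InDualBassClass.of_isGorensteinInjective (hW : IsWakamatsuTilting S R T)
    (htf : IsTensorlyFaithful S R T)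
    (hT : (∃ n, ProjDimLE Rᵐᵒᵖ T n) ∨ (∃ n, InjDimLE Rᵐᵒᵖ T n)) {M : Type u} [AddCommGroup M]
    [Module Rᵐᵒᵖ M] (hM : IsGorensteinInjective Rᵐᵒᵖ M) : InDualBassClass S R T M := by
  obtain ⟨C, hI, hC, hH, ⟨e⟩⟩ := hM
  have hext (i : ℤ) (k : ℕ) : ExtZero Rᵐᵒᵖ T (LinearMap.ker (C.d i)) (k + 1) := by
    rcases hT with ⟨n, hn⟩ | ⟨n, hn⟩
    · exact ZComplex.extZero_cycles_of_projDimLE hC hI hn i k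
    · exact ZComplex.extZero_cycles_of_injDimLE hC hI hH hn i k
  refine .of_exact htf (f := (LinearMap.ker (C.d 0)).subtype.comp e.toLinearMap)
    ((Submodule.injective_subtype _).comp e.injective) ?_ (ZComplex.toCycles_surjective hC 0)
    (.of_injective hW (hI 0)) (.of_cycles hW hI hC hext (0 + 1))
  intro x
  rw [ZComplex.toCycles_exact hC 0 x, LinearMap.coe_comp, Set.range_comp]
  simp [e.surjective.range_eq]

theorem InDualBassClass.of_gidLE (hW : IsWakamatsuTilting S R T)
    (htf : IsTensorlyFaithful S R T)
    (hT : (∃ n, ProjDimLE Rᵐᵒᵖ T n) ∨ (∃ n, InjDimLE Rᵐᵒᵖ T n)) (n : ℕ)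
    {M : ModuleCat.{u} Rᵐᵒᵖ}
    (hM : HasClassCoresolution Rᵐᵒᵖ (fun E => IsGorensteinInjective Rᵐᵒᵖ E) n M) :
    InDualBassClass S R T M := by
  induction n generalizing M with
  | zero => exact .of_isGorensteinInjective hW htf hT hM
  | succ n ih =>
    obtain ⟨m, hm, hk⟩ := hM
    exact .of_exact htf m.inj (LinearMap.exact_map_mkQ_range m.f) (Submodule.mkQ_surjective _)
      (.of_isGorensteinInjective hW htf hT hm) (ih hk)

end GorensteinInjective

/-- Let `T` be a tensorly faithful Wakamatsu tilting `(S,R)`-bimodule and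
`M` a right `R`-module of finite Gorenstein injective dimension. If either `pd(T_R) < ∞` or
`id(T_R) < ∞`, then `M ∈ ℬ_T(R)`. -/
theorem finite_Gid_mem_bass
    (S R : Type u) [Ring S] [Ring R]
    (T : Type u) [AddCommGroup T] [Module S T] [Module Rᵐᵒᵖ T] [SMulCommClass S Rᵐᵒᵖ T]
    (hW : IsWakamatsuTilting S R T) (htf : IsTensorlyFaithful S R T)
    (M : Type u) [AddCommGroup M] [Module Rᵐᵒᵖ M] (hM : ∃ n, GidLE Rᵐᵒᵖ M n)
    (hT : (∃ n, ProjDimLE Rᵐᵒᵖ T n) ∨ (∃ n, InjDimLE Rᵐᵒᵖ T n)) :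
    InBassClass S R T M := by
  obtain ⟨n, hn⟩ := hM
  exact (InDualBassClass.of_gidLE hW htf hT n hn).inBassClass hW
end
end

section
/- If T is a Wakamatsu tilting (S,R)-bimodule such that the projective dimension of T as a right R-module and the projective dimension of T as a left S-module are both finite, then T is a tilting right R-module; that is, T is an n-tilting module for some n ∈ ℕ. -/
open Function MulOpposite

universe u

noncomputable section

section FiniteResolutions

open CategoryTheory CategoryTheory.Abelian

variable {A : Type u} [Ring A]

/-! ### Shifting resolutions -/

/-- The resolution of the first syzygy `ker ε` obtained by truncating a resolution. -/
def ResolutionData.syzygy {X : Type u} [AddCommGroup X] [Module A X] (Q : ResolutionData A X)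
    (hQ : Q.IsProjResolution) : ResolutionData A (LinearMap.ker Q.ε) where
  P n := Q.P (n + 1)
  d n := Q.d (n + 1)
  ε := (Q.d 0).codRestrict _ fun x => (hQ.exact0 _).2 ⟨x, rfl⟩

theorem ResolutionData.IsProjResolution.syzygy {X : Type u} [AddCommGroup X] [Module A X]
    {Q : ResolutionData A X} (hQ : Q.IsProjResolution) :
    (Q.syzygy hQ).IsProjResolution where
  proj n := hQ.proj (n + 1)
  surj := by
    rintro ⟨y, hy⟩
    obtain ⟨x, hx⟩ := (hQ.exact0 y).1 hy
    exact ⟨x, Subtype.ext hx⟩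
  exact0 x := Subtype.ext_iff.trans (hQ.exactSucc 0 x)
  exactSucc n := hQ.exactSucc (n + 1)

/-! ### Projective dimension -/

theorem hasProjectiveDimensionLE_of_hasClassResolution (n : ℕ) :
    ∀ M : ModuleCat.{u} A, HasClassResolution A (fun P => Module.Projective A P) n M →
      HasProjectiveDimensionLE M n := by
  induction n with
  | zero =>
    intro M (hM : Module.Projective A M)
    exact (projective_iff_hasProjectiveDimensionLE_zero M).1 inferInstance
  | succ n ih =>
    rintro M ⟨e, he, hk⟩
    have hS := LinearMap.shortExact_shortComplexKer e.surj
    have : Module.Projective A e.P := he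
    have hp : Projective e.f.shortComplexKer.X₂ :=
      inferInstanceAs (Projective (ModuleCat.of A e.P))
    exact (hS.hasProjectiveDimensionLT_X₃_iff n hp).2 (ih _ hk)

theorem hasClassResolution_finite_projective (n : ℕ) :
    ∀ M : ModuleCat.{u} A, HasFGProjResolution A M → HasProjectiveDimensionLE M n →
      HasClassResolution A (fun P => Module.Projective A P ∧ Module.Finite A P) n M := by
  induction n with
  | zero =>
    rintro M ⟨Q, hQ, hfin⟩ hM
    have := (projective_iff_hasProjectiveDimensionLE_zero M).2 hM
    have := hfin 0
    exact ⟨inferInstance, Module.Finite.of_surjective Q.ε hQ.surj⟩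
  | succ n ih =>
    rintro M ⟨Q, hQ, hfin⟩ hM
    have := hQ.proj 0
    have hS := LinearMap.shortExact_shortComplexKer hQ.surj
    have hp : Projective Q.ε.shortComplexKer.X₂ :=
      inferInstanceAs (Projective (ModuleCat.of A (Q.P 0)))
    refine ⟨⟨ModuleCat.of A (Q.P 0), Q.ε, hQ.surj⟩, ⟨hQ.proj 0, hfin 0⟩, ?_⟩
    exact ih _ ⟨Q.syzygy hQ, hQ.syzygy, fun k => hfin (k + 1)⟩
      ((hS.hasProjectiveDimensionLT_X₃_iff n hp).1 hM)

/-! ### Vanishing of `Ext` -/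

/-- If `Ext^1(X, Y) = 0`, maps from the kernel of `P → X` to `Y` extend to `P`. -/
theorem exists_extension_of_subsingleton_ext {P X Y : Type u} [AddCommGroup P] [Module A P]
    [AddCommGroup X] [Module A X] [AddCommGroup Y] [Module A Y] {f : P →ₗ[A] X}
    (hf : Function.Surjective f)
    (h : Subsingleton (Ext.{u} (ModuleCat.of A X) (ModuleCat.of A Y) 1))
    (g : LinearMap.ker f →ₗ[A] Y) : ∃ g' : P →ₗ[A] Y, ∀ x : LinearMap.ker f, g' x = g x := by
  have hS := LinearMap.shortExact_shortComplexKer hf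
  obtain ⟨y, hy⟩ := Ext.contravariant_sequence_exact₁ hS (ModuleCat.of A Y)
    (Ext.mk₀ (ModuleCat.ofHom g)) (add_zero 1) (h.elim _ _)
  obtain ⟨y, rfl⟩ := Ext.homEquiv₀.symm.surjective y
  have hcomp : f.shortComplexKer.f ≫ y = ModuleCat.ofHom g :=
    Ext.homEquiv₀.symm.injective (by simpa using hy)
  exact ⟨y.hom, fun x => congrArg (fun t => t.hom x) hcomp⟩

/-- Vanishing of `Ext` passes to the kernel of a surjection from a projective module. -/
theorem subsingleton_ext_ker {P X : Type u} [AddCommGroup P] [Module A P]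
    [AddCommGroup X] [Module A X] [Module.Projective A P] {f : P →ₗ[A] X}
    (hf : Function.Surjective f) (Y : ModuleCat.{u} A) (i : ℕ)
    (h : Subsingleton (Ext.{u} (ModuleCat.of A X) Y (i + 2))) :
    Subsingleton (Ext.{u} (ModuleCat.of A (LinearMap.ker f)) Y (i + 1)) := by
  have hS := LinearMap.shortExact_shortComplexKer hf
  have hp : Projective f.shortComplexKer.X₂ := inferInstanceAs (Projective (ModuleCat.of A P))
  refine subsingleton_of_forall_eq 0 fun x => ?_
  obtain ⟨y, rfl⟩ := Ext.contravariant_sequence_exact₁ hS Y x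
    (show 1 + (i + 1) = i + 2 by lia) (h.elim _ _)
  rw [y.eq_zero_of_projective, Ext.comp_zero]

/-- Vanishing of `Ext` on the kernel of a surjection from a projective module passes to its
target. -/
theorem subsingleton_ext_of_ker {P X : Type u} [AddCommGroup P] [Module A P]
    [AddCommGroup X] [Module A X] [Module.Projective A P] {f : P →ₗ[A] X}
    (hf : Function.Surjective f) (Y : ModuleCat.{u} A) (i : ℕ)
    (h : Subsingleton (Ext.{u} (ModuleCat.of A (LinearMap.ker f)) Y (i + 1))) :
    Subsingleton (Ext.{u} (ModuleCat.of A X) Y (i + 2)) := by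
  have hS := LinearMap.shortExact_shortComplexKer hf
  have hp : Projective f.shortComplexKer.X₂ := inferInstanceAs (Projective (ModuleCat.of A P))
  refine subsingleton_of_forall_eq 0 fun x => ?_
  obtain ⟨y, rfl⟩ := Ext.contravariant_sequence_exact₃ hS Y x
    (Ext.eq_zero_of_projective _) (show 1 + (i + 1) = i + 2 by lia)
  rw [h.elim y 0, Ext.comp_zero]

/-- If maps from the kernel of a surjection `P → X` with `P` projective extend to `P`, then
`Ext^1(X, Y) = 0`. -/
theorem subsingleton_ext_one_of_exists_extension {P X Y : Type u} [AddCommGroup P] [Module A P]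
    [AddCommGroup X] [Module A X] [AddCommGroup Y] [Module A Y] [Module.Projective A P]
    {f : P →ₗ[A] X} (hf : Function.Surjective f)
    (h : ∀ g : LinearMap.ker f →ₗ[A] Y, ∃ g' : P →ₗ[A] Y, ∀ x : LinearMap.ker f, g' x = g x) :
    Subsingleton (Ext.{u} (ModuleCat.of A X) (ModuleCat.of A Y) 1) := by
  have hS := LinearMap.shortExact_shortComplexKer hf
  have hp : Projective f.shortComplexKer.X₂ := inferInstanceAs (Projective (ModuleCat.of A P))
  refine subsingleton_of_forall_eq 0 fun x => ?_
  obtain ⟨y, rfl⟩ := Ext.contravariant_sequence_exact₃ hS (ModuleCat.of A Y) x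
    (Ext.eq_zero_of_projective _) (add_zero 1)
  obtain ⟨y, rfl⟩ := Ext.homEquiv₀.symm.surjective y
  obtain ⟨g', hg'⟩ := h y.hom
  have hy : y = f.shortComplexKer.f ≫ ModuleCat.ofHom g' := by
    ext x
    exact (hg' x).symm
  rw [Ext.homEquiv₀_symm_apply, hy, ← Ext.mk₀_comp_mk₀, hS.extClass_comp_assoc]

theorem ExtVanishAll.subsingleton_ext {Y : Type u} [AddCommGroup Y] [Module A Y] (i : ℕ) :
    ∀ {X : Type u} [AddCommGroup X] [Module A X], ExtVanishAll A X Y →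
      Subsingleton (Ext.{u} (ModuleCat.of A X) (ModuleCat.of A Y) (i + 1)) := by
  induction i with
  | zero =>
    rintro X _ _ ⟨Q, hQ, hex⟩
    have := hQ.proj 0
    refine subsingleton_ext_one_of_exists_extension hQ.surj fun g => ?_
    have hz : (g.comp (Q.syzygy hQ).ε).comp (Q.d 1) = 0 := by
      ext x
      have : (Q.syzygy hQ).ε (Q.d 1 x) = 0 := (hQ.syzygy.exact0 _).2 ⟨x, rfl⟩
      exact (congrArg g this).trans g.map_zero
    obtain ⟨g', hg'⟩ := (hex 0 _).1 hz
    refine ⟨g', fun x => ?_⟩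
    obtain ⟨p, rfl⟩ := hQ.syzygy.surj x
    exact LinearMap.congr_fun hg' p
  | succ i ih =>
    rintro X _ _ ⟨Q, hQ, hex⟩
    have := hQ.proj 0
    exact subsingleton_ext_of_ker hQ.surj _ i
      (ih ⟨Q.syzygy hQ, hQ.syzygy, fun j => hex (j + 1)⟩)

/-! ### Class (co)resolutions -/

theorem HasClassResolution.succ {C : ModuleCat.{u} A → Prop}
    (hC : ∀ M : ModuleCat.{u} A, Subsingleton M → C M) (n : ℕ) :
    ∀ M, HasClassResolution A C n M → HasClassResolution A C (n + 1) M := by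
  induction n with
  | zero =>
    intro M hM
    refine ⟨⟨M, LinearMap.id, Function.surjective_id⟩, hM, hC _ ?_⟩
    exact LinearMap.ker_id (R := A) (M := M) ▸ inferInstanceAs (Subsingleton (⊥ : Submodule A M))
  | succ n ih =>
    rintro M ⟨e, he, hk⟩
    exact ⟨e, he, ih _ hk⟩

theorem HasClassCoresolution.succ {C : ModuleCat.{u} A → Prop}
    (hC : ∀ M : ModuleCat.{u} A, Subsingleton M → C M) (n : ℕ) :
    ∀ M, HasClassCoresolution A C n M → HasClassCoresolution A C (n + 1) M := by
  induction n with
  | zero =>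
    intro M hM
    refine ⟨⟨M, LinearMap.id, Function.injective_id⟩, hM, hC _ ?_⟩
    exact Submodule.Quotient.subsingleton_iff.2 LinearMap.range_id
  | succ n ih =>
    rintro M ⟨e, he, hk⟩
    exact ⟨e, he, ih _ hk⟩

theorem HasClassResolution.mono {C : ModuleCat.{u} A → Prop}
    (hC : ∀ M : ModuleCat.{u} A, Subsingleton M → C M) {n m : ℕ} (h : n ≤ m)
    {M : ModuleCat.{u} A} (hM : HasClassResolution A C n M) : HasClassResolution A C m M :=
  Nat.le_induction hM (fun _ _ => HasClassResolution.succ hC _ M) m h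

theorem HasClassCoresolution.mono {C : ModuleCat.{u} A → Prop}
    (hC : ∀ M : ModuleCat.{u} A, Subsingleton M → C M) {n m : ℕ} (h : n ≤ m)
    {M : ModuleCat.{u} A} (hM : HasClassCoresolution A C n M) : HasClassCoresolution A C m M :=
  Nat.le_induction hM (fun _ _ => HasClassCoresolution.succ hC _ M) m h

theorem HasClassCoresolution.of_linearEquiv {C : ModuleCat.{u} A → Prop}
    (hC : ∀ M N : ModuleCat.{u} A, (M ≃ₗ[A] N) → C M → C N) :
    ∀ {n : ℕ} {M N : ModuleCat.{u} A}, (M ≃ₗ[A] N) → HasClassCoresolution A C n M →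
      HasClassCoresolution A C n N
  | 0, M, N, φ, hM => hC M N φ hM
  | n + 1, M, N, φ, ⟨m, hm, hq⟩ => by
    refine ⟨⟨m.E, m.f.comp φ.symm.toLinearMap, m.inj.comp φ.symm.injective⟩, hm, ?_⟩
    exact HasClassCoresolution.of_linearEquiv hC
      (Submodule.quotEquivOfEq _ _ (LinearEquiv.range_comp φ.symm m.f).symm) hq

theorem InFinAddClass.of_linearEquiv {T : Type u} [AddCommGroup T] [Module A T]
    (M N : ModuleCat.{u} A) (φ : M ≃ₗ[A] N) : InFinAddClass A T M → InFinAddClass A T N := by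
  rintro ⟨k, f, g, hfg⟩
  refine ⟨k, f.comp φ.symm.toLinearMap, φ.toLinearMap.comp g, LinearMap.ext fun x => ?_⟩
  have := LinearMap.congr_fun hfg (φ.symm x)
  simp only [LinearMap.comp_apply, LinearMap.id_apply, LinearEquiv.coe_coe] at this ⊢
  rw [this, φ.apply_symm_apply]

theorem InFinAddClass.of_subsingleton {T : Type u} [AddCommGroup T] [Module A T]
    (M : ModuleCat.{u} A) (_ : Subsingleton M) : InFinAddClass A T M :=
  ⟨0, 0, 0, LinearMap.ext fun _ => Subsingleton.elim _ _⟩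

/-! ### Applying `Hom_A(-, T)` to finite resolutions -/

section Hom

variable {B : Type u} [Ring B] {T : Type u} [AddCommGroup T] [Module A T] [Module B T]
  [SMulCommClass A B T]

theorem inFinAddClass_hom (M : Type u) [AddCommGroup M] [Module A M]
    [Module.Projective A M] [Module.Finite A M] :
    InFinAddClass B T (ModuleCat.of B (M →ₗ[A] T)) := by
  obtain ⟨k, p, i, -, -, hpi⟩ := Module.Finite.exists_comp_eq_id_of_projective A M
  let e : (Fin k → T) →ₗ[B] ((Fin k → A) →ₗ[A] T) :=
    { toFun := fun v => Fintype.linearCombination A v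
      map_add' := fun v w => by ext; simp
      map_smul' := fun b v => by ext; simp }
  refine ⟨k, LinearMap.pi fun j => ?_, (LinearMap.lcomp B T i).comp e, ?_⟩
  · exact
      { toFun := fun f => f (p (Pi.single j 1))
        map_add' := fun _ _ => rfl
        map_smul' := fun _ _ => rfl }
  · ext f x
    have : e (fun j => f (p (Pi.single j 1))) = f.comp p := by
      ext j
      simp [e, Fintype.linearCombination_apply_single]
    exact (LinearMap.congr_fun this (i x)).trans
      (congrArg f (LinearMap.congr_fun hpi x))

theorem hasClassCoresolution_hom (n : ℕ) : ∀ M : ModuleCat.{u} A,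
    HasClassResolution A (fun P => Module.Projective A P ∧ Module.Finite A P) n M →
    (∀ i, Subsingleton (Ext.{u} M (ModuleCat.of A T) (i + 1))) →
      HasClassCoresolution B (InFinAddClass B T) n (ModuleCat.of B (M →ₗ[A] T)) := by
  induction n with
  | zero =>
    rintro M ⟨_, _⟩ -
    exact inFinAddClass_hom M
  | succ n ih =>
    rintro M ⟨e, ⟨_, _⟩, hk⟩ hM
    let res : (e.P →ₗ[A] T) →ₗ[B] (LinearMap.ker e.f →ₗ[A] T) :=
      LinearMap.lcomp B T (LinearMap.ker e.f).subtype
    have hres : Function.Surjective res := fun g => by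
      obtain ⟨g', hg'⟩ := exists_extension_of_subsingleton_ext e.surj (hM 0) g
      exact ⟨g', LinearMap.ext hg'⟩
    have hker : LinearMap.ker res = LinearMap.range (LinearMap.lcomp B T e.f) := by
      ext g
      constructor
      · intro hg
        have hle : LinearMap.ker e.f ≤ LinearMap.ker g :=
          fun x hx => LinearMap.congr_fun hg ⟨x, hx⟩
        refine ⟨((LinearMap.ker e.f).liftQ g hle).comp
          (e.f.quotKerEquivOfSurjective e.surj).symm.toLinearMap, LinearMap.ext fun x => ?_⟩
        have : (e.f.quotKerEquivOfSurjective e.surj).symm (e.f x) = Submodule.Quotient.mk x := by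
          rw [LinearEquiv.symm_apply_eq]
          rfl
        simp [this]
      · rintro ⟨h, rfl⟩
        refine LinearMap.ext fun x => ?_
        change h (e.f x) = 0
        rw [x.2, map_zero]
    refine ⟨⟨ModuleCat.of B (e.P →ₗ[A] T), LinearMap.lcomp B T e.f, fun h h' hh =>
      LinearMap.ext fun y => ?_⟩, inFinAddClass_hom e.P, ?_⟩
    · obtain ⟨x, rfl⟩ := e.surj y
      exact LinearMap.congr_fun hh x
    · refine HasClassCoresolution.of_linearEquiv InFinAddClass.of_linearEquiv ?_
        (ih _ hk fun i => subsingleton_ext_ker e.surj _ i (hM (i + 1)))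
      exact ((Submodule.quotEquivOfEq _ _ hker).symm.trans
        (res.quotKerEquivOfSurjective hres)).symm

end Hom

end FiniteResolutions

/-- The right homothety as an isomorphism of right `R`-modules. -/
def rightHomothetyEquiv (S R : Type u) [Ring S] [Ring R] (T : Type u) [AddCommGroup T]
    [Module S T] [Module Rᵐᵒᵖ T] [SMulCommClass S Rᵐᵒᵖ T]
    (h : Function.Bijective (rightHomothety S R T)) : R ≃ₗ[Rᵐᵒᵖ] (T →ₗ[S] T) :=
  LinearEquiv.ofBijective
    ({ toFun := rightHomothety S R T
       map_add' := fun r r' => LinearMap.ext fun t => add_smul (op r) (op r') t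
       map_smul' := fun ρ r => LinearMap.ext fun t => mul_smul ρ (op r) t } :
      R →ₗ[Rᵐᵒᵖ] (T →ₗ[S] T)) h

/-- If `T` is a Wakamatsu tilting `(S,R)`-bimodule with `pd(T_R) < ∞` and
`pd(_S T) < ∞`, then `T` is an `n`-tilting right `R`-module for some `n`. -/
theorem wakamatsu_finite_projDim_is_tilting
    (S R : Type u) [Ring S] [Ring R]
    (T : Type u) [AddCommGroup T] [Module S T] [Module Rᵐᵒᵖ T] [SMulCommClass S Rᵐᵒᵖ T]
    (hW : IsWakamatsuTilting S R T)
    (hpdR : ∃ n, ProjDimLE Rᵐᵒᵖ T n) (hpdS : ∃ n, ProjDimLE S T n) :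
    ∃ n, IsNTilting R T n := by
  obtain ⟨m, hm⟩ := hpdR
  obtain ⟨n, hn⟩ := hpdS
  have hres := hasClassResolution_finite_projective n (ModuleCat.of S T) hW.fgProjResS
    (hasProjectiveDimensionLE_of_hasClassResolution n _ hn)
  have hcores : HasClassCoresolution Rᵐᵒᵖ (InFinAddClass Rᵐᵒᵖ T) n (ModuleCat.of Rᵐᵒᵖ R) :=
    HasClassCoresolution.of_linearEquiv InFinAddClass.of_linearEquiv
      (rightHomothetyEquiv S R T hW.bijR).symm
      (hasClassCoresolution_hom n _ hres fun i => hW.extS.subsingleton_ext i)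
  exact ⟨max m n, hW.fgProjResR,
    HasClassResolution.mono (fun _ _ => Module.Projective.of_free) (le_max_left m n) hm,
    hW.extR, hcores.mono InFinAddClass.of_subsingleton (le_max_right m n)⟩
end
end
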